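/- arXiv:0705.4221 — 2 statements merged into one kernel-verified Lean document; each statement's English description precedes it below -/
import Mathlib

section
/- Let T > 0, let F assign continuously to each t ∈ [0,T] real values F(t)(i,j) at interior points, and let u₀ be a grid function vanishing on the boundary. Let y₀ : [0,T] → (grid functions vanishing on the boundary) be the C¹ solution of the reference semi-discrete heat equation ∂_t y₀(t)(i,j) + (A y₀(t))(i,j) = F(t)(i,j) at interior points, y₀(0) = u₀, and assume the discrete non-degeneracy condition: (1/2) y₀(t)(2,j) − 2 y₀(t)(1,j) ≠ 0 for every t ∈ [0,T] and every j with 1 ≤ j ≤ N−1. Then the semi-discrete heat equation is locally exactly controllable by the shape of the domain: there exist ε ∈ (0,1/2) and δ > 0 such that for every family of interior values Z with max over interior (i,j) of |Z(i,j) − y₀(T)(i,j)| < δ, there exist a continuous λ : [0,T] → ℝ^{N−1} with sup_{t,j} |λ_j(t)| ≤ ε and a C¹ map u : [0,T] → (grid functions vanishing on the boundary) such that ∂_t u(t)(i,j) + (A(λ(t)) u(t))(i,j) = F(t)(i,j) at interior points, u(0) = u₀, and u(T)(i,j) = Z(i,j) at every interior point. -/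
open Set

/-- The point `(i,j)` is an interior node of the grid `Ω_h`. -/
def isInterior (M N : ℤ) (i j : ℤ) : Prop :=
  1 ≤ i ∧ i ≤ M - 1 ∧ 1 ≤ j ∧ j ≤ N - 1

/-- The point `(i,j)` belongs to the grid `Ω_h`. -/
def onGrid (M N : ℤ) (i j : ℤ) : Prop :=
  0 ≤ i ∧ i ≤ M ∧ 0 ≤ j ∧ j ≤ N

/-- The point `(i,j)` belongs to the discrete boundary `Γ⁰` of `Ω_h`. -/
def onBoundary (M N : ℤ) (i j : ℤ) : Prop :=
  onGrid M N i j ∧ ¬ isInterior M N i j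

/-- The discrete Dirichlet Laplacian `(A X)(i,j)`. -/
noncomputable def discLap (h : ℝ) (X : ℤ → ℤ → ℝ) (i j : ℤ) : ℝ :=
  (1 / h ^ 2) * (4 * X i j - X (i + 1) j - X (i - 1) j - X i (j + 1) - X i (j - 1))

/-- The perturbed operator `A(λ)`: it agrees with the discrete Laplacian away from the
first layer `i = 1`, and is modified on the first layer according to the deformation `λ`. -/
noncomputable def pertOp (h : ℝ) (lam : ℤ → ℝ) (X : ℤ → ℤ → ℝ) (i j : ℤ) : ℝ :=
  if i = 1 then
    (1 / h ^ 2) * (2 * (1 + 1 / (1 + lam j)) * X 1 j - (2 / (2 + lam j)) * X 2 j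
      - X 1 (j + 1) - X 1 (j - 1))
  else discLap h X i j

abbrev IntPt (M N : ℤ) := {p : ℤ × ℤ // isInterior M N p.1 p.2}

instance intPtFinite (M N : ℤ) : Finite (IntPt M N) := by
  apply Set.Finite.to_subtype
  apply Set.Finite.subset ((Set.finite_Icc 1 (M-1)).prod (Set.finite_Icc 1 (N-1)))
  rintro ⟨i, j⟩ ⟨h1, h2, h3, h4⟩
  exact ⟨⟨h1, h2⟩, ⟨h3, h4⟩⟩

noncomputable instance intPtFintype (M N : ℤ) : Fintype (IntPt M N) := Fintype.ofFinite _

open Classical in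
noncomputable def extZ (M N : ℤ) (X : IntPt M N → ℝ) (i j : ℤ) : ℝ :=
  if hij : isInterior M N i j then X ⟨(i, j), hij⟩ else 0

lemma extZ_in (M N : ℤ) (X : IntPt M N → ℝ) (i j : ℤ) (hij : isInterior M N i j) :
    extZ M N X i j = X ⟨(i, j), hij⟩ := by simp [extZ, hij]

lemma extZ_out (M N : ℤ) (X : IntPt M N → ℝ) (i j : ℤ) (hij : ¬ isInterior M N i j) :
    extZ M N X i j = 0 := by simp [extZ, hij]

lemma extZ_add (M N : ℤ) (X Y : IntPt M N → ℝ) (i j : ℤ) :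
    extZ M N (X + Y) i j = extZ M N X i j + extZ M N Y i j := by
  by_cases hij : isInterior M N i j <;> simp [extZ, hij]

lemma extZ_smul (M N : ℤ) (c : ℝ) (X : IntPt M N → ℝ) (i j : ℤ) :
    extZ M N (c • X) i j = c * extZ M N X i j := by
  by_cases hij : isInterior M N i j <;> simp [extZ, hij]

noncomputable def lapL (M N : ℤ) (h : ℝ) : (IntPt M N → ℝ) →ₗ[ℝ] (IntPt M N → ℝ) where
  toFun X := fun p => discLap h (extZ M N X) p.1.1 p.1.2
  map_add' X Y := by
    funext p
    simp only [discLap, extZ_add, Pi.add_apply]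
    ring
  map_smul' c X := by
    funext p
    simp only [discLap, extZ_smul, Pi.smul_apply, RingHom.id_apply, smul_eq_mul]
    ring

/-- A smooth solution of the free equation with prescribed value at time `T`. -/
lemma exists_free (M N : ℤ) (h T : ℝ) (z : ℤ → ℤ → ℝ) :
    ∃ ψ : ℝ → ℤ → ℤ → ℝ,
      (∀ i j, ContDiff ℝ (⊤ : ℕ∞) (fun t => ψ t i j)) ∧
      (∀ t i j, ¬ isInterior M N i j → ψ t i j = 0) ∧
      (∀ t i j, isInterior M N i j → HasDerivAt (fun s => ψ s i j) (- discLap h (ψ t) i j) t) ∧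
      (∀ i j, isInterior M N i j → ψ T i j = z i j) := by
  set A : (IntPt M N → ℝ) →L[ℝ] (IntPt M N → ℝ) := - LinearMap.toContinuousLinearMap (lapL M N h) with hA
  let z' : IntPt M N → ℝ := fun p => z p.1.1 p.1.2
  let f : ℝ → (IntPt M N → ℝ) := fun t => (NormedSpace.exp ((t - T) • A)) z'
  have hf : ∀ t, HasDerivAt f (A (f t)) t := by
    intro t
    have h1 := (hasDerivAt_exp_smul_const' (𝕂 := ℝ) A (t - T)).comp_sub_const t T
    have h2 := h1.clm_apply (hasDerivAt_const t z')
    simpa [f] using h2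
  have hsm : ∀ n : ℕ, ContDiff ℝ n f := by
    intro n
    induction n with
    | zero =>
      rw [Nat.cast_zero, contDiff_zero]
      exact continuous_iff_continuousAt.2 fun t => (hf t).continuousAt
    | succ n ih =>
      rw [Nat.cast_succ, contDiff_succ_iff_deriv]
      refine ⟨fun t => (hf t).differentiableAt, by simp, ?_⟩
      have : deriv f = fun t => A (f t) := funext fun t => (hf t).deriv
      rw [this]
      exact A.contDiff.comp ih
  have hsm' : ContDiff ℝ (⊤ : ℕ∞) f := contDiff_infty.2 hsm
  refine ⟨fun t => extZ M N (f t), ?_, ?_, ?_, ?_⟩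
  · intro i j
    by_cases hij : isInterior M N i j
    · simp only [extZ_in M N _ i j hij]
      exact (contDiff_pi.1 hsm') _
    · simp only [extZ_out M N _ i j hij]
      exact contDiff_const
  · intro t i j hij
    exact extZ_out M N _ i j hij
  · intro t i j hij
    simp only [extZ_in M N _ i j hij]
    have := (hasDerivAt_pi.1 (hf t)) ⟨(i, j), hij⟩
    simpa [hA, lapL] using this
  · intro i j hij
    simp [extZ_in M N _ i j hij, f, z']

/-- The rows obtained from the last row by the downward recursion. -/
noncomputable def vrow (N : ℤ) (h : ℝ) (φ : ℤ → ℝ → ℝ) : ℕ → ℤ → ℝ → ℝ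
  | 0 => fun _ _ => 0
  | 1 => φ
  | (k + 2) => fun j t => if 1 ≤ j ∧ j ≤ N - 1 then
      h ^ 2 * deriv (vrow N h φ (k + 1) j) t + 4 * vrow N h φ (k + 1) j t
        - vrow N h φ (k + 1) (j + 1) t - vrow N h φ (k + 1) (j - 1) t - vrow N h φ k j t
      else 0

lemma vrow_smooth (N : ℤ) (h : ℝ) (φ : ℤ → ℝ → ℝ)
    (hφ : ∀ j, ContDiff ℝ (⊤ : ℕ∞) (φ j)) :
    ∀ k, (∀ j, ContDiff ℝ (⊤ : ℕ∞) (vrow N h φ k j)) ∧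
      (∀ j, ContDiff ℝ (⊤ : ℕ∞) (vrow N h φ (k + 1) j)) := by
  intro k
  induction k with
  | zero => exact ⟨fun j => by simpa [vrow] using contDiff_const, fun j => by simpa [vrow] using hφ j⟩
  | succ k ih =>
    refine ⟨ih.2, fun j => ?_⟩
    have hd := (contDiff_infty_iff_deriv.1 (ih.2 j)).2
    have h1 := ih.2 j
    have h2 := ih.2 (j + 1)
    have h3 := ih.2 (j - 1)
    have h4 := ih.1 j
    by_cases hj : 1 ≤ j ∧ j ≤ N - 1
    · simp only [vrow, hj, and_self, if_true]
      exact ((((contDiff_const.mul hd).add (contDiff_const.mul h1)).sub h2).sub h3).sub h4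
    · simp only [vrow, hj, if_false]
      exact contDiff_const

lemma vrow_out (N : ℤ) (h : ℝ) (φ : ℤ → ℝ → ℝ)
    (hφ : ∀ j, ¬ (1 ≤ j ∧ j ≤ N - 1) → ∀ t, φ j t = 0) (k : ℕ) (j : ℤ)
    (hj : ¬ (1 ≤ j ∧ j ≤ N - 1)) (t : ℝ) : vrow N h φ k j t = 0 := by
  match k with
  | 0 => rfl
  | 1 => exact hφ j hj t
  | k + 2 => simp only [vrow, hj, if_false]

lemma vrow_zero (N : ℤ) (h : ℝ) (φ : ℤ → ℝ → ℝ) (U : Set ℝ) (hU : IsOpen U)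
    (hφ : ∀ j, ∀ t ∈ U, φ j t = 0) :
    ∀ k, (∀ j, ∀ t ∈ U, vrow N h φ k j t = 0) ∧ (∀ j, ∀ t ∈ U, vrow N h φ (k + 1) j t = 0) := by
  intro k
  induction k with
  | zero => exact ⟨fun j t _ => rfl, hφ⟩
  | succ k ih =>
    refine ⟨ih.2, fun j t ht => ?_⟩
    have hd : deriv (vrow N h φ (k + 1) j) t = 0 := by
      have : vrow N h φ (k + 1) j =ᶠ[nhds t] fun _ => (0 : ℝ) := by
        filter_upwards [hU.mem_nhds ht] with s hs using ih.2 j s hs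
      rw [this.deriv_eq]; simp
    simp only [vrow, hd, ih.2 _ t ht, ih.1 _ t ht]
    simp

lemma vrow_free (M N : ℤ) (h : ℝ) (hh : 0 < h) (φ : ℤ → ℝ → ℝ) (U : Set ℝ) (hU : IsOpen U)
    (ψ : ℝ → ℤ → ℤ → ℝ)
    (hout : ∀ t i j, ¬ isInterior M N i j → ψ t i j = 0)
    (hode : ∀ t i j, isInterior M N i j → HasDerivAt (fun s => ψ s i j) (- discLap h (ψ t) i j) t)
    (hφ : ∀ j, ∀ t ∈ U, φ j t = ψ t (M - 1) j) :
    ∀ k : ℕ, (k : ℤ) + 1 ≤ M - 1 → (∀ j, ∀ t ∈ U, vrow N h φ k j t = ψ t (M - k) j) ∧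
      (∀ j, ∀ t ∈ U, vrow N h φ (k + 1) j t = ψ t (M - (k + 1)) j) := by
  intro k
  induction k with
  | zero =>
    intro _
    refine ⟨fun j t _ => ?_, fun j t ht => ?_⟩
    · rw [hout]
      · rfl
      · unfold isInterior; push_cast; omega
    · simpa [vrow] using hφ j t ht
  | succ k ih =>
    intro hk
    push_cast at hk
    have ih := ih (by omega)
    push_cast
    refine ⟨ih.2, fun j t ht => ?_⟩
    by_cases hj : 1 ≤ j ∧ j ≤ N - 1
    · have hd : deriv (vrow N h φ (k + 1) j) t = - discLap h (ψ t) (M - (k + 1)) j := by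
        have : vrow N h φ (k + 1) j =ᶠ[nhds t] fun s => ψ s (M - (k + 1)) j := by
          filter_upwards [hU.mem_nhds ht] with s hs using ih.2 j s hs
        rw [this.deriv_eq]
        exact (hode t _ j (by unfold isInterior; omega)).deriv
      simp only [vrow, hd, ih.2 _ t ht, ih.1 _ t ht, hj, and_self, if_true, discLap]
      rw [show M - ((k : ℤ) + 1) + 1 = M - k by ring,
        show M - ((k : ℤ) + 1) - 1 = M - (k + 1 + 1) by ring]
      field_simp
      ring
    · rw [hout _ _ _ (by unfold isInterior; omega)]
      simp only [vrow, hj, if_false]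

/-- Null-to-target trajectories of the linear part, by flatness. -/
lemma exists_ctrl (M N : ℤ) (hM : 3 ≤ M) (h T : ℝ) (hh : 0 < h) (hT : 0 < T) (z : ℤ → ℤ → ℝ) :
    ∃ w : ℝ → ℤ → ℤ → ℝ,
      (∀ i j, ContDiff ℝ (⊤ : ℕ∞) (fun t => w t i j)) ∧
      (∀ t i j, ¬ isInterior M N i j → w t i j = 0) ∧
      (∀ t i j, isInterior M N i j → 2 ≤ i →
        HasDerivAt (fun s => w s i j) (- discLap h (w t) i j) t) ∧
      (∀ i j, w 0 i j = 0) ∧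
      (∀ i j, isInterior M N i j → w T i j = z i j) := by
  obtain ⟨ψ, hsm, hout, hode, hz⟩ := exists_free M N h T z
  let χ : ℝ → ℝ := fun t => Real.smoothTransition (3 * t / T - 1)
  have hχ : ContDiff ℝ (⊤ : ℕ∞) χ := by
    apply Real.smoothTransition.contDiff.comp
    fun_prop
  let φ : ℤ → ℝ → ℝ := fun j t => χ t * ψ t (M - 1) j
  have hφ : ∀ j, ContDiff ℝ (⊤ : ℕ∞) (φ j) := fun j => hχ.mul (hsm _ j)
  have hφo : ∀ j, ¬ (1 ≤ j ∧ j ≤ N - 1) → ∀ t, φ j t = 0 := by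
    intro j hj t
    simp only [φ]
    rw [hout t _ _ (by unfold isInterior; omega), mul_zero]
  have hφ0 : ∀ j, ∀ t ∈ Iio (T / 3), φ j t = 0 := by
    intro j t ht
    have : χ t = 0 := by
      apply Real.smoothTransition.zero_of_nonpos
      have ht : t < T / 3 := ht
      rw [sub_nonpos, div_le_one hT]; linarith
    simp [φ, this]
  have hφ1 : ∀ j, ∀ t ∈ Ioi (2 * T / 3), φ j t = ψ t (M - 1) j := by
    intro j t ht
    have : χ t = 1 := by
      apply Real.smoothTransition.one_of_one_le
      have ht : 2 * T / 3 < t := ht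
      rw [le_sub_iff_add_le, le_div_iff₀ hT]; linarith
    simp [φ, this]
  have hs := vrow_smooth N h φ hφ
  refine ⟨fun t i j => if 1 ≤ i ∧ i ≤ M then vrow N h φ (M - i).toNat j t else 0, ?_, ?_, ?_, ?_, ?_⟩
  · intro i j
    by_cases hi : 1 ≤ i ∧ i ≤ M
    · simp only [hi, and_self, if_true]; exact (hs _).1 j
    · simp only [hi, if_false]; exact contDiff_const
  · intro t i j hij
    by_cases hi : 1 ≤ i ∧ i ≤ M
    · simp only [hi, and_self, if_true]
      by_cases hj : 1 ≤ j ∧ j ≤ N - 1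
      · have : i = M := by unfold isInterior at hij; omega
        subst this
        simp [vrow]
      · exact vrow_out N h φ hφo _ j hj t
    · simp only [hi, if_false]
  · intro t i j hij hi2
    obtain ⟨k, hk⟩ : ∃ k : ℕ, M - i = k + 1 := ⟨(M - i - 1).toNat, by unfold isInterior at hij; omega⟩
    have hi : i = M - (k + 1) := by omega
    subst hi
    obtain ⟨h1, h2, h3, h4⟩ := hij
    have e1 : (1 ≤ M - ((k : ℤ) + 1) ∧ M - ((k : ℤ) + 1) ≤ M) := by omega
    have e2 : (1 ≤ M - ((k : ℤ) + 1) + 1 ∧ M - ((k : ℤ) + 1) + 1 ≤ M) := by omega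
    have e3 : (1 ≤ M - ((k : ℤ) + 1) - 1 ∧ M - ((k : ℤ) + 1) - 1 ≤ M) := by omega
    have f1 : (M - (M - ((k : ℤ) + 1))).toNat = k + 1 := by omega
    have f2 : (M - (M - ((k : ℤ) + 1) + 1)).toNat = k := by omega
    have f3 : (M - (M - ((k : ℤ) + 1) - 1)).toNat = k + 2 := by omega
    simp only [discLap, if_pos e1, if_pos e2, if_pos e3, f1, f2, f3]
    have hd : HasDerivAt (vrow N h φ (k + 1) j) (deriv (vrow N h φ (k + 1) j) t) t :=
      (((hs k).2 j).differentiable (by simp) t).hasDerivAt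
    convert hd using 1
    simp only [vrow, h3, h4, and_self, if_true]
    field_simp
    ring
  · intro i j
    by_cases hi : 1 ≤ i ∧ i ≤ M
    · simp only [hi, and_self, if_true]
      exact (vrow_zero N h φ _ isOpen_Iio hφ0 _).1 j 0 (by simp; positivity)
    · simp only [hi, if_false]
  · intro i j hij
    obtain ⟨k, hk⟩ : ∃ k : ℕ, M - i = k + 1 := ⟨(M - i - 1).toNat, by unfold isInterior at hij; omega⟩
    have hi : i = M - (k + 1) := by omega
    subst hi
    rw [← hz _ j hij]
    obtain ⟨h1, h2, h3, h4⟩ := hij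
    have e1 : (1 ≤ M - ((k : ℤ) + 1) ∧ M - ((k : ℤ) + 1) ≤ M) := by omega
    have f1 : (M - (M - ((k : ℤ) + 1))).toNat = k + 1 := by omega
    simp only [if_pos e1, f1]
    refine (vrow_free M N h hh φ _ isOpen_Ioi ψ hout hode hφ1 k (by omega)).2 j T ?_
    simp only [mem_Ioi]; linarith

lemma exists_ctrl_bdd (M N : ℤ) (hM : 3 ≤ M) (h T : ℝ) (hh : 0 < h) (hT : 0 < T) :
    ∃ C > (0 : ℝ), ∀ η ≥ (0 : ℝ), ∀ z : ℤ → ℤ → ℝ,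
    (∀ i j, isInterior M N i j → |z i j| ≤ η) → ∃ w : ℝ → ℤ → ℤ → ℝ,
      (∀ i j, ContDiff ℝ (⊤ : ℕ∞) (fun t => w t i j)) ∧
      (∀ t i j, ¬ isInterior M N i j → w t i j = 0) ∧
      (∀ t i j, isInterior M N i j → 2 ≤ i →
        HasDerivAt (fun s => w s i j) (- discLap h (w t) i j) t) ∧
      (∀ i j, w 0 i j = 0) ∧
      (∀ i j, isInterior M N i j → w T i j = z i j) ∧
      (∀ t ∈ Icc 0 T, ∀ i j, |w t i j| ≤ C * η) ∧
      (∀ t ∈ Icc 0 T, ∀ i j, |deriv (fun s => w s i j) t| ≤ C * η) := by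
  classical
  choose W hsm hout hode h0 hz using fun p : IntPt M N =>
    exists_ctrl M N hM h T hh hT (fun i j => if i = p.1.1 ∧ j = p.1.2 then 1 else 0)
  have hsmd : ∀ p i j, Continuous (deriv (fun s => W p s i j)) := fun p i j =>
    (hsm p i j).continuous_deriv (by simp)
  have hb : ∀ p q : IntPt M N, ∃ B, ∀ t ∈ Icc 0 T, |W p t q.1.1 q.1.2| ≤ B ∧
      |deriv (fun s => W p s q.1.1 q.1.2) t| ≤ B := by
    intro p q
    obtain ⟨B1, hB1⟩ := (isCompact_Icc (a := (0:ℝ)) (b := T)).exists_bound_of_continuousOn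
      (hsm p q.1.1 q.1.2).continuous.continuousOn
    obtain ⟨B2, hB2⟩ := (isCompact_Icc (a := (0:ℝ)) (b := T)).exists_bound_of_continuousOn
      (hsmd p q.1.1 q.1.2).continuousOn
    exact ⟨max B1 B2, fun t ht => ⟨(hB1 t ht).trans (le_max_left _ _),
      (hB2 t ht).trans (le_max_right _ _)⟩⟩
  choose B hB using hb
  have hBnn : ∀ p q, 0 ≤ B p q := fun p q =>
    (abs_nonneg _).trans (hB p q 0 ⟨le_rfl, hT.le⟩).1
  let S : ℝ := ∑ p, ∑ q, B p q
  have hBS : ∀ q, ∑ p, B p q ≤ S := by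
    intro q
    apply Finset.sum_le_sum
    intro p _
    exact Finset.single_le_sum (f := fun q => B p q) (fun q _ => hBnn p q) (Finset.mem_univ q)
  have hS : 0 ≤ S := Finset.sum_nonneg fun p _ => Finset.sum_nonneg fun q _ => hBnn p q
  refine ⟨S + 1, by positivity, ?_⟩
  intro η hη z hzη
  have hwd : ∀ i j t, HasDerivAt (fun s => ∑ p : IntPt M N, z p.1.1 p.1.2 * W p s i j)
      (∑ p : IntPt M N, z p.1.1 p.1.2 * deriv (fun s => W p s i j) t) t := by
    intro i j t
    apply HasDerivAt.fun_sum
    intro p _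
    apply HasDerivAt.const_mul
    exact ((hsm p i j).differentiable (by simp) t).hasDerivAt
  have key : ∀ (q : IntPt M N) (f : IntPt M N → ℝ), (∀ p, |f p| ≤ B p q) →
      |∑ p : IntPt M N, z p.1.1 p.1.2 * f p| ≤ (S + 1) * η := by
    intro q f hf
    calc |∑ p : IntPt M N, z p.1.1 p.1.2 * f p| ≤ ∑ p : IntPt M N, |z p.1.1 p.1.2 * f p| :=
          Finset.abs_sum_le_sum_abs _ _
      _ ≤ ∑ p : IntPt M N, η * B p q := by
          apply Finset.sum_le_sum
          intro p _
          rw [abs_mul]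
          exact mul_le_mul (hzη _ _ p.2) (hf p) (abs_nonneg _) hη
      _ = η * ∑ p, B p q := by rw [Finset.mul_sum]
      _ ≤ η * (S + 1) := by
          apply mul_le_mul_of_nonneg_left _ hη
          linarith [hBS q]
      _ = _ := mul_comm _ _
  refine ⟨fun t i j => ∑ p : IntPt M N, z p.1.1 p.1.2 * W p t i j, ?_, ?_, ?_, ?_, ?_, ?_, ?_⟩
  · intro i j
    apply ContDiff.sum
    intro p _
    exact contDiff_const.mul (hsm p i j)
  · intro t i j hij
    simp [hout _ t i j hij]
  · intro t i j hij hi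
    convert hwd i j t using 1
    simp only [fun p => (hode p t i j hij hi).deriv, discLap, Finset.mul_sum, ← Finset.sum_sub_distrib,
      ← Finset.sum_neg_distrib]
    apply Finset.sum_congr rfl
    intro p _
    ring
  · intro i j
    simp [h0]
  · intro i j hij
    simp only [hz _ i j hij]
    rw [Finset.sum_eq_single ⟨(i, j), hij⟩]
    · simp
    · intro p _ hp
      rw [if_neg, mul_zero]
      rintro ⟨e1, e2⟩
      apply hp
      ext <;> simp [e1, e2]
    · simp
  · intro t ht i j
    by_cases hij : isInterior M N i j
    · exact key ⟨(i, j), hij⟩ _ fun p => (hB p ⟨(i, j), hij⟩ t ht).1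
    · simp only [hout _ t i j hij]
      simp; positivity
  · intro t ht i j
    rw [(hwd i j t).deriv]
    by_cases hij : isInterior M N i j
    · exact key ⟨(i, j), hij⟩ _ fun p => (hB p ⟨(i, j), hij⟩ t ht).2
    · simp only [hout _ _ i j hij]
      simp; positivity

/-- The explicit root of the scalar quadratic equation for the deformation. -/
noncomputable def lamRoot (a b r : ℝ) : ℝ :=
  (4 * r / (4 * a - b - 3 * r)) /
    (1 + Real.sqrt (1 + 8 * (2 * a - b - r) * r / (4 * a - b - 3 * r) ^ 2))

lemma lamRoot_abs (a b r m : ℝ) (hm : 0 < m) (hQ : m / 2 ≤ |4 * a - b - 3 * r|)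
    (hr : |r| ≤ m / 32) : |lamRoot a b r| ≤ 1 / 4 := by
  unfold lamRoot
  have hs := Real.sqrt_nonneg (1 + 8 * (2 * a - b - r) * r / (4 * a - b - 3 * r) ^ 2)
  rw [abs_div, abs_div, abs_of_pos (a := 1 + _) (by linarith)]
  have h1 : |4 * r| / |4 * a - b - 3 * r| ≤ 1 / 4 := by
    rw [div_le_iff₀ (by linarith), abs_mul]
    norm_num
    linarith
  exact (div_le_self (by positivity) (by linarith)).trans h1

lemma lamRoot_eq (a b r : ℝ) (hQ : 4 * a - b - 3 * r ≠ 0)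
    (hD : |8 * (2 * a - b - r) * r| ≤ (4 * a - b - 3 * r) ^ 2)
    (hl : |lamRoot a b r| ≤ 1 / 4) :
    2 * (1 + 1 / (1 + lamRoot a b r)) * a - 2 / (2 + lamRoot a b r) * b = 4 * a - b - r := by
  have hq : (2 * a - b - r) * lamRoot a b r ^ 2 + (4 * a - b - 3 * r) * lamRoot a b r - 2 * r = 0 := by
    unfold lamRoot
    set Q := 4 * a - b - 3 * r with hQd
    set P := 2 * a - b - r with hPd
    have hnn : 0 ≤ 1 + 8 * P * r / Q ^ 2 := by
      have hp : 0 < Q ^ 2 := by positivity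
      have : -1 ≤ 8 * P * r / Q ^ 2 := by
        rw [le_div_iff₀ hp]
        linarith [(abs_le.1 hD).1]
      linarith
    have hss := Real.sq_sqrt hnn
    set s := Real.sqrt (1 + 8 * P * r / Q ^ 2)
    have hs : 0 ≤ s := Real.sqrt_nonneg _
    have hs1 : 1 + s ≠ 0 := by positivity
    have h8 : Q ^ 2 * (s ^ 2 - 1) = 8 * P * r := by
      rw [hss]; field_simp; ring
    field_simp
    linear_combination (-2 * r) * h8
  have hl' := abs_le.1 hl
  set l := lamRoot a b r
  have h1 : 1 + l ≠ 0 := by linarith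
  have h2 : 2 + l ≠ 0 := by linarith
  field_simp
  linear_combination (-1 : ℝ) * hq

lemma quant (K m ρ H θ hs y1 y2 w1 w2 wp wm d : ℝ) (hK : 1 ≤ K) (hm : m = 1 / K)
    (hρ : ρ = m ^ 2 / (32 * (3 * K + 1))) (hH : H = hs + 8) (hs0 : 0 ≤ hs) (hθ : H * θ = ρ)
    (hy1 : |y1| ≤ K) (hy2 : |y2| ≤ K) (hQ0 : m ≤ |4 * y1 - y2|)
    (h1 : |w1| ≤ θ) (h2 : |w2| ≤ θ) (h3 : |wp| ≤ θ) (h4 : |wm| ≤ θ) (h5 : |d| ≤ θ) (r : ℝ)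
    (hr : r = hs * d + 4 * w1 - w2 - wp - wm) :
    |r| ≤ m / 32 ∧ m / 2 ≤ |4 * (y1 + w1) - (y2 + w2) - 3 * r| ∧
    |8 * (2 * (y1 + w1) - (y2 + w2) - r) * r| ≤ (4 * (y1 + w1) - (y2 + w2) - 3 * r) ^ 2 := by
  have hm0 : 0 < m := by rw [hm]; positivity
  have hm1 : m ≤ 1 := by rw [hm, div_le_one (by linarith)]; exact hK
  have hθ0 : 0 ≤ θ := (abs_nonneg _).trans h1
  have hρe : ρ * (32 * (3 * K + 1)) = m ^ 2 := by rw [hρ]; field_simp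
  have hρ0 : 0 < ρ := by rw [hρ]; positivity
  have hρm : ρ ≤ m / 32 := by nlinarith
  have hrρ : |r| ≤ ρ := by
    have e : |hs * d| ≤ hs * θ := by
      rw [abs_mul, abs_of_nonneg hs0]; exact mul_le_mul_of_nonneg_left h5 hs0
    rw [abs_le] at *
    rw [hr, ← hθ, hH]
    constructor <;> nlinarith
  have h8 : 8 * θ ≤ ρ := by rw [← hθ, hH]; nlinarith
  have hQ : m / 2 ≤ |4 * (y1 + w1) - (y2 + w2) - 3 * r| := by
    have : |4 * y1 - y2| ≤ |4 * (y1 + w1) - (y2 + w2) - 3 * r| + |-(4 * w1 - w2 - 3 * r)| := by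
      refine le_trans (le_of_eq ?_) (abs_add_le _ _)
      congr 1; ring
    have h' : |-(4 * w1 - w2 - 3 * r)| ≤ 4 * ρ := by
      rw [abs_le] at h1 h2 hrρ ⊢
      constructor <;> linarith
    linarith
  refine ⟨hrρ.trans hρm, hQ, ?_⟩
  have hP : |2 * (y1 + w1) - (y2 + w2) - r| ≤ 3 * K + 1 := by
    rw [abs_le] at h1 h2 hrρ hy1 hy2 ⊢
    constructor <;> linarith
  rw [abs_mul, abs_mul, ← sq_abs (4 * (y1 + w1) - (y2 + w2) - 3 * r), abs_of_pos (by norm_num : (0:ℝ) < 8)]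
  have a1 : 8 * |2 * (y1 + w1) - (y2 + w2) - r| * |r| ≤ 8 * (3 * K + 1) * ρ := by
    gcongr
  have a2 : (m / 2) ^ 2 ≤ |4 * (y1 + w1) - (y2 + w2) - 3 * r| ^ 2 := by
    gcongr
  nlinarith

/-- local exact controllability of the semi-discrete heat equation by the
shape of the domain. If the reference solution `y₀` of `∂_t y₀ + A y₀ = F`, `y₀(0) = u₀`
satisfies the discrete non-degeneracy condition, then every family of interior values `Z`
sufficiently close to `y₀(T)` is reached at time `T` by the solution of the perturbed
equation `∂_t u + A(λ(t)) u = F`, `u(0) = u₀`, for some small continuous deformation `λ`. -/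
theorem stmt13 (M N : ℤ) (hM : 3 ≤ M) (hN : 3 ≤ N) (h : ℝ) (hh : 0 < h)
    (T : ℝ) (hT : 0 < T)
    (F : ℝ → ℤ → ℤ → ℝ)
    (hF : ∀ i j, isInterior M N i j → ContinuousOn (fun t => F t i j) (Icc (0 : ℝ) T))
    (u₀ : ℤ → ℤ → ℝ) (hu₀ : ∀ i j, onBoundary M N i j → u₀ i j = 0)
    (y₀ : ℝ → ℤ → ℤ → ℝ)
    (hy₀bd : ∀ t ∈ Icc (0 : ℝ) T, ∀ i j, onBoundary M N i j → y₀ t i j = 0)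
    (hy₀ode : ∀ t ∈ Icc (0 : ℝ) T, ∀ i j, isInterior M N i j →
      HasDerivWithinAt (fun s => y₀ s i j) (F t i j - discLap h (y₀ t) i j)
        (Icc (0 : ℝ) T) t)
    (hy₀init : y₀ 0 = u₀)
    (hnd : ∀ t ∈ Icc (0 : ℝ) T, ∀ j : ℤ, 1 ≤ j → j ≤ N - 1 →
      (1 / 2) * y₀ t 2 j - 2 * y₀ t 1 j ≠ 0) :
    ∃ ε ∈ Ioo (0 : ℝ) (1 / 2), ∃ δ > (0 : ℝ),
      ∀ Z : ℤ → ℤ → ℝ, (∀ i j, isInterior M N i j → |Z i j - y₀ T i j| < δ) →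
        ∃ lam : ℝ → ℤ → ℝ,
          (∀ j, ContinuousOn (fun t => lam t j) (Icc (0 : ℝ) T)) ∧
          (∀ t ∈ Icc (0 : ℝ) T, ∀ j, |lam t j| ≤ ε) ∧
          ∃ u : ℝ → ℤ → ℤ → ℝ,
            (∀ t ∈ Icc (0 : ℝ) T, ∀ i j, onBoundary M N i j → u t i j = 0) ∧
            (∀ t ∈ Icc (0 : ℝ) T, ∀ i j, isInterior M N i j →
              HasDerivWithinAt (fun s => u s i j)
                (F t i j - pertOp h (lam t) (u t) i j) (Icc (0 : ℝ) T) t) ∧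
            u 0 = u₀ ∧
            (∀ i j, isInterior M N i j → u T i j = Z i j) := by
  have hyc : ∀ i j, isInterior M N i j → ContinuousOn (fun t => y₀ t i j) (Icc 0 T) :=
    fun i j hij t ht => (hy₀ode t ht i j hij).continuousWithinAt
  have hI1 : ∀ j : ℤ, 1 ≤ j → j ≤ N - 1 → isInterior M N 1 j := by
    intro j h1 h2; unfold isInterior; omega
  have hI2 : ∀ j : ℤ, 1 ≤ j → j ≤ N - 1 → isInterior M N 2 j := by
    intro j h1 h2; unfold isInterior; omega
  have hne : ∀ t ∈ Icc 0 T, ∀ j : ℤ, 1 ≤ j → j ≤ N - 1 → 4 * y₀ t 1 j - y₀ t 2 j ≠ 0 := by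
    intro t ht j h1 h2 h0
    exact hnd t ht j h1 h2 (by linarith)
  have hG : ∀ j : ℤ, ∃ G : ℝ, 0 ≤ G ∧ (1 ≤ j → j ≤ N - 1 → ∀ t ∈ Icc 0 T,
      |y₀ t 1 j| + |y₀ t 2 j| + |(4 * y₀ t 1 j - y₀ t 2 j)⁻¹| ≤ G) := by
    intro j
    by_cases hj : 1 ≤ j ∧ j ≤ N - 1
    · have c1 := hyc 1 j (hI1 j hj.1 hj.2)
      have c2 := hyc 2 j (hI2 j hj.1 hj.2)
      have c3 : ContinuousOn (fun t => (4 * y₀ t 1 j - y₀ t 2 j)⁻¹) (Icc 0 T) :=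
        ((continuousOn_const.mul c1).sub c2).inv₀ fun t ht => hne t ht j hj.1 hj.2
      obtain ⟨G, hGb⟩ := (isCompact_Icc (a := (0:ℝ)) (b := T)).exists_bound_of_continuousOn
        ((c1.abs.add c2.abs).add c3.abs)
      refine ⟨G, (norm_nonneg _).trans (hGb 0 ⟨le_rfl, hT.le⟩), fun _ _ t ht => ?_⟩
      exact (le_abs_self _).trans (hGb t ht)
    · exact ⟨0, le_rfl, fun h1 h2 => absurd ⟨h1, h2⟩ hj⟩
  choose G hG0 hGb using hG
  obtain ⟨K, hKd⟩ : ∃ K, K = (∑ j ∈ Finset.Icc 1 (N - 1), G j) + 1 := ⟨_, rfl⟩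
  have hK1 : 1 ≤ K := by
    rw [hKd]; linarith [Finset.sum_nonneg (s := Finset.Icc 1 (N - 1)) fun j _ => hG0 j]
  have hKj : ∀ j : ℤ, 1 ≤ j → j ≤ N - 1 → G j ≤ K := by
    intro j h1 h2
    rw [hKd]
    linarith [Finset.single_le_sum (f := G) (fun j _ => hG0 j) (Finset.mem_Icc.2 ⟨h1, h2⟩)]
  obtain ⟨m, hm⟩ : ∃ m, m = 1 / K := ⟨_, rfl⟩
  have hm0 : 0 < m := by rw [hm]; positivity
  obtain ⟨ρ, hρ⟩ : ∃ ρ, ρ = m ^ 2 / (32 * (3 * K + 1)) := ⟨_, rfl⟩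
  have hρ0 : 0 < ρ := by rw [hρ]; positivity
  obtain ⟨H, hH⟩ : ∃ H, H = h ^ 2 + 8 := ⟨_, rfl⟩
  have hH0 : 0 < H := by rw [hH]; positivity
  obtain ⟨C, hC, hctrl⟩ := exists_ctrl_bdd M N hM h T hh hT
  refine ⟨1 / 4, by norm_num, ρ / H / C, by positivity, ?_⟩
  intro Z hZ
  obtain ⟨w, wsm, wout, wode, w0, wT, wb, wdb⟩ := hctrl (ρ / H / C) (by positivity)
    (fun i j => Z i j - y₀ T i j) (fun i j hij => (hZ i j hij).le)
  rw [mul_div_cancel₀ _ hC.ne'] at wb wdb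
  have hθ : H * (ρ / H) = ρ := mul_div_cancel₀ _ hH0.ne'
  let r : ℝ → ℤ → ℝ := fun t j => h ^ 2 * deriv (fun s => w s 1 j) t + 4 * w t 1 j - w t 2 j
    - w t 1 (j + 1) - w t 1 (j - 1)
  have hq : ∀ t ∈ Icc 0 T, ∀ j : ℤ, 1 ≤ j → j ≤ N - 1 → |r t j| ≤ m / 32 ∧
      m / 2 ≤ |4 * (y₀ t 1 j + w t 1 j) - (y₀ t 2 j + w t 2 j) - 3 * r t j| ∧
      |8 * (2 * (y₀ t 1 j + w t 1 j) - (y₀ t 2 j + w t 2 j) - r t j) * r t j|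
        ≤ (4 * (y₀ t 1 j + w t 1 j) - (y₀ t 2 j + w t 2 j) - 3 * r t j) ^ 2 := by
    intro t ht j h1 h2
    have hg := (hGb j h1 h2 t ht).trans (hKj j h1 h2)
    have n1 := abs_nonneg (y₀ t 1 j)
    have n2 := abs_nonneg (y₀ t 2 j)
    have n3 := abs_nonneg (4 * y₀ t 1 j - y₀ t 2 j)⁻¹
    refine quant K m ρ H (ρ / H) (h ^ 2) _ _ _ _ _ _ _ hK1 hm hρ hH (by positivity) hθ
      (by linarith) (by linarith) ?_ (wb t ht 1 j) (wb t ht 2 j) (wb t ht 1 (j + 1))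
      (wb t ht 1 (j - 1)) (wdb t ht 1 j) _ rfl
    have hp : 0 < |4 * y₀ t 1 j - y₀ t 2 j| := abs_pos.2 (hne t ht j h1 h2)
    rw [abs_inv] at hg n3
    have hg' : |4 * y₀ t 1 j - y₀ t 2 j|⁻¹ ≤ K := by linarith
    rw [hm, one_div]
    exact inv_le_of_inv_le₀ hp hg'
  have hQne : ∀ t ∈ Icc 0 T, ∀ j : ℤ, 1 ≤ j → j ≤ N - 1 →
      4 * (y₀ t 1 j + w t 1 j) - (y₀ t 2 j + w t 2 j) - 3 * r t j ≠ 0 := by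
    intro t ht j h1 h2
    apply abs_pos.1
    linarith [(hq t ht j h1 h2).2.1]
  have hla : ∀ t ∈ Icc 0 T, ∀ j : ℤ, 1 ≤ j → j ≤ N - 1 →
      |lamRoot (y₀ t 1 j + w t 1 j) (y₀ t 2 j + w t 2 j) (r t j)| ≤ 1 / 4 := by
    intro t ht j h1 h2
    obtain ⟨a1, a2, a3⟩ := hq t ht j h1 h2
    exact lamRoot_abs _ _ _ m hm0 a2 a1
  refine ⟨fun t j => if 1 ≤ j ∧ j ≤ N - 1 then
    lamRoot (y₀ t 1 j + w t 1 j) (y₀ t 2 j + w t 2 j) (r t j) else 0, ?_, ?_,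
    fun t i j => y₀ t i j + w t i j, ?_, ?_, ?_, ?_⟩
  · intro j
    by_cases hj : 1 ≤ j ∧ j ≤ N - 1
    · simp only [hj, and_self, if_true]
      have cw : ∀ i j, ContinuousOn (fun t => w t i j) (Icc 0 T) :=
        fun i j => (wsm i j).continuous.continuousOn
      have cd : ContinuousOn (fun t => deriv (fun s => w s 1 j) t) (Icc 0 T) :=
        ((wsm 1 j).continuous_deriv (by simp)).continuousOn
      have cr : ContinuousOn (fun t => r t j) (Icc 0 T) :=
        ((((continuousOn_const.mul cd).add (continuousOn_const.mul (cw 1 j))).sub (cw 2 j)).sub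
          (cw 1 (j + 1))).sub (cw 1 (j - 1))
      have c1 := (hyc 1 j (hI1 j hj.1 hj.2)).add (cw 1 j)
      have c2 := (hyc 2 j (hI2 j hj.1 hj.2)).add (cw 2 j)
      have cQ := ((continuousOn_const (c := (4:ℝ))).mul c1 |>.sub c2).sub
        ((continuousOn_const (c := (3:ℝ))).mul cr)
      have cP := (((continuousOn_const (c := (2:ℝ))).mul c1).sub c2).sub cr
      unfold lamRoot
      refine ContinuousOn.div (ContinuousOn.div (continuousOn_const.mul cr) cQ ?_) ?_ ?_
      · intro t ht; exact hQne t ht j hj.1 hj.2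
      · refine continuousOn_const.add (ContinuousOn.sqrt (continuousOn_const.add
          (ContinuousOn.div ((continuousOn_const.mul cP).mul cr) (cQ.pow 2) ?_)))
        intro t ht; exact pow_ne_zero 2 (hQne t ht j hj.1 hj.2)
      · intro t ht
        positivity
    · simp only [hj, if_false]; exact continuousOn_const
  · intro t ht j
    by_cases hj : 1 ≤ j ∧ j ≤ N - 1
    · simp only [hj, and_self, if_true]; exact hla t ht j hj.1 hj.2
    · simp only [hj, if_false]; norm_num
  · intro t ht i j hij
    simp only
    rw [hy₀bd t ht i j hij, wout t i j hij.2, add_zero]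
  · intro t ht i j hij
    by_cases hi : i = 1
    · subst hi
      have hj : 1 ≤ j ∧ j ≤ N - 1 := ⟨hij.2.2.1, hij.2.2.2⟩
      have hdw : HasDerivAt (fun s => w s 1 j) (deriv (fun s => w s 1 j) t) t :=
        ((wsm 1 j).differentiable (by simp) t).hasDerivAt
      refine ((hy₀ode t ht 1 j hij).add hdw.hasDerivWithinAt).congr_deriv ?_
      have hb0 : y₀ t 0 j = 0 := hy₀bd t ht 0 j (by
        unfold onBoundary onGrid isInterior; omega)
      have he := lamRoot_eq _ _ _ (hQne t ht j hj.1 hj.2) (hq t ht j hj.1 hj.2).2.2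
        (hla t ht j hj.1 hj.2)
      simp only [pertOp, if_true, discLap, hj, and_self]
      rw [he]
      norm_num [hb0]
      simp only [r]
      field_simp
      ring
    · have hi2 : 2 ≤ i := by have := hij.1; omega
      refine ((hy₀ode t ht i j hij).add (wode t i j hij hi2).hasDerivWithinAt).congr_deriv ?_
      simp only [pertOp, hi, if_false, discLap]
      ring
  · funext i j
    simp only [w0, hy₀init, add_zero]
  · intro i j hij
    simp only
    rw [wT i j hij]; ring
end

section
/- Let T > 0, let F assign continuously to each t ∈ [0,T] real values F(t)(i,j) at interior points, and let u₀, u₁ be grid functions vanishing on the boundary. Let y₀ : [0,T] → (grid functions vanishing on the boundary) be the C² solution of the reference semi-discrete wave equation ∂_t² y₀(t)(i,j) + (A y₀(t))(i,j) = F(t)(i,j) at interior points, y₀(0) = u₀, ∂_t y₀(0) = u₁, and assume the discrete non-degeneracy condition: (1/2) y₀(t)(2,j) − 2 y₀(t)(1,j) ≠ 0 for every t ∈ [0,T] and every j with 1 ≤ j ≤ N−1. Then the semi-discrete wave equation is locally exactly controllable by the shape of the domain: there exist ε ∈ (0,1/2) and δ > 0 such that for every pair of families of interior values (Z, W) with max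 over interior (i,j) of (|Z(i,j) − y₀(T)(i,j)| + |W(i,j) − ∂_t y₀(T)(i,j)|) < δ, there exist a continuously differentiable λ : [0,T] → ℝ^{N−1} with sup_{t,j} |λ_j(t)| ≤ ε and sup_{t,j} |λ_j'(t)| < 1, and a C² map u : [0,T] → (grid functions vanishing on the boundary) such that ∂_t² u(t)(i,j) + (A(λ(t)) u(t))(i,j) = F(t)(i,j) at interior points, u(0) = u₀, ∂_t u(0) = u₁, and u(T)(i,j) = Z(i,j), ∂_t u(T)(i,j) = W(i,j) at every interior point. -/
open Set

open scoped ContDiff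


/-- scalar quadratic lemma -/
lemma quad_control (T K β : ℝ) (hT : 0 < T) (hK : 1 ≤ K) (hβ : 0 < β) (hβ1 : β ≤ 1)
    (G G' a a' b b' : ℝ → ℝ)
    (dG : ∀ t ∈ Icc (0:ℝ) T, HasDerivWithinAt G (G' t) (Icc 0 T) t)
    (da : ∀ t ∈ Icc (0:ℝ) T, HasDerivWithinAt a (a' t) (Icc 0 T) t)
    (db : ∀ t ∈ Icc (0:ℝ) T, HasDerivWithinAt b (b' t) (Icc 0 T) t)
    (cG : ContinuousOn G' (Icc 0 T)) (ca : ContinuousOn a' (Icc 0 T))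
    (cb : ContinuousOn b' (Icc 0 T))
    (ba : ∀ t ∈ Icc (0:ℝ) T, |a t| ≤ K) (ba' : ∀ t ∈ Icc (0:ℝ) T, |a' t| ≤ K)
    (bb' : ∀ t ∈ Icc (0:ℝ) T, |b' t| ≤ K) (bb : ∀ t ∈ Icc (0:ℝ) T, β ≤ |b t|)
    (bG : ∀ t ∈ Icc (0:ℝ) T, |G t| ≤ β ^ 2 / (64 * K))
    (bG' : ∀ t ∈ Icc (0:ℝ) T, |G' t| ≤ β ^ 2 / (64 * K)) :
    ∃ l l' : ℝ → ℝ, (∀ t ∈ Icc (0:ℝ) T, HasDerivWithinAt l (l' t) (Icc 0 T) t) ∧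
      ContinuousOn l' (Icc 0 T) ∧ (∀ t ∈ Icc (0:ℝ) T, |l t| ≤ 1 / 4) ∧
      (∀ t ∈ Icc (0:ℝ) T, |l' t| < 1) ∧
      ∀ t ∈ Icc (0:ℝ) T, a t * l t ^ 2 + b t * l t + 2 * G t = 0 := by
  have hK0 : 0 < K := by linarith
  have hη : 0 < β ^ 2 / (64 * K) := by positivity
  set η := β ^ 2 / (64 * K) with hηd
  have hηK : 64 * K * η = β ^ 2 := by rw [hηd]; field_simp
  have bne : ∀ t ∈ Icc (0:ℝ) T, b t ≠ 0 := fun t ht h0 => by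
    have := bb t ht; rw [h0, abs_zero] at this; linarith
  set D : ℝ → ℝ := fun t => 1 - 8 * a t * G t / b t ^ 2 with hD
  have hDpos : ∀ t ∈ Icc (0:ℝ) T, 1 / 2 ≤ D t := by
    intro t ht
    have h1 : |a t * G t| ≤ K * η := by
      rw [abs_mul]; exact mul_le_mul (ba t ht) (bG t ht) (abs_nonneg _) hK0.le
    have h2 : β ^ 2 ≤ b t ^ 2 := by
      rw [← sq_abs (b t)]; exact pow_le_pow_left₀ hβ.le (bb t ht) 2
    have h3 : 0 < b t ^ 2 := by have := bne t ht; positivity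
    have h4 : 8 * a t * G t / b t ^ 2 ≤ 1 / 2 := by
      rw [div_le_iff₀ h3]
      have := le_abs_self (a t * G t)
      nlinarith
    simp only [hD]; linarith
  set l : ℝ → ℝ := fun t => -(4 * G t / b t) / (1 + Real.sqrt (D t)) with hl
  have hquad : ∀ t ∈ Icc (0:ℝ) T, a t * l t ^ 2 + b t * l t + 2 * G t = 0 := by
    intro t ht
    have hb := bne t ht
    have hs := Real.sqrt_nonneg (D t)
    have hsq := Real.sq_sqrt (show 0 ≤ D t by linarith [hDpos t ht])
    simp only [hl]
    set s := Real.sqrt (D t)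
    have hs1 : 1 + s ≠ 0 := by positivity
    have h8 : 8 * a t * G t = (1 - s ^ 2) * b t ^ 2 := by
      rw [hsq, hD]; field_simp; ring
    field_simp
    linear_combination (2 * G t) * h8
  have hlb : ∀ t ∈ Icc (0:ℝ) T, |l t| ≤ 4 * η / β := by
    intro t ht
    have hs := Real.sqrt_nonneg (D t)
    simp only [hl, abs_div, abs_neg, abs_mul]
    rw [abs_of_pos (show 0 < 1 + Real.sqrt (D t) by positivity), abs_of_pos (show (0:ℝ) < 4 by norm_num)]
    calc 4 * |G t| / |b t| / (1 + Real.sqrt (D t)) ≤ 4 * |G t| / |b t| :=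
          div_le_self (by positivity) (by linarith)
      _ ≤ 4 * η / β := by
          have := bG t ht
          have := bb t ht
          gcongr
  have hlb' : ∀ t ∈ Icc (0:ℝ) T, |l t| ≤ β / (16 * K) := by
    intro t ht
    refine (hlb t ht).trans (le_of_eq ?_)
    rw [hηd]; field_simp; norm_num
  have hle : β / (16 * K) ≤ 1 / 16 := by
    rw [div_le_iff₀ (by positivity)]; linarith
  have hden : ∀ t ∈ Icc (0:ℝ) T, β / 2 ≤ |2 * a t * l t + b t| := by
    intro t ht
    have h1 : |a t * l t| ≤ β / 16 := by
      rw [abs_mul]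
      calc _ ≤ K * (β / (16 * K)) := mul_le_mul (ba t ht) (hlb' t ht) (abs_nonneg _) hK0.le
        _ = β / 16 := by field_simp
    have h2 : |b t| ≤ |2 * a t * l t + b t| + 2 * |a t * l t| := by
      have := abs_sub (2 * a t * l t + b t) (2 * (a t * l t))
      rw [abs_mul 2, abs_of_pos (show (0:ℝ) < 2 by norm_num)] at this
      have e : 2 * a t * l t + b t - 2 * (a t * l t) = b t := by ring
      rwa [e] at this
    linarith [bb t ht]
  have hdne : ∀ t ∈ Icc (0:ℝ) T, 2 * a t * l t + b t ≠ 0 := fun t ht h0 => by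
    have := hden t ht; rw [h0, abs_zero] at this; linarith
  have hldiff : ∀ t ∈ Icc (0:ℝ) T, DifferentiableWithinAt ℝ l (Icc 0 T) t := by
    intro t ht
    have e1 := (dG t ht).differentiableWithinAt
    have e2 := (da t ht).differentiableWithinAt
    have e3 := (db t ht).differentiableWithinAt
    have hb := bne t ht
    have eD : DifferentiableWithinAt ℝ D (Icc 0 T) t :=
      (((e2.const_mul 8).mul e1).div (e3.pow 2) (pow_ne_zero 2 hb)).const_sub 1
    have hs := Real.sqrt_nonneg (D t)
    exact (((e1.const_mul 4).div e3 hb).neg).div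
      ((eD.sqrt (by linarith [hDpos t ht])).const_add 1) (by positivity)
  have hlc : ContinuousOn l (Icc 0 T) := fun t ht => (hldiff t ht).continuousWithinAt
  refine ⟨l, fun t => -(a' t * l t ^ 2 + b' t * l t + 2 * G' t) / (2 * a t * l t + b t),
    ?_, ?_, ?_, ?_, hquad⟩
  · intro t ht
    have hd := (hldiff t ht).hasDerivWithinAt
    set d := derivWithin l (Icc 0 T) t
    have hsum := (((da t ht).mul (hd.pow 2)).add ((db t ht).mul hd)).add ((dG t ht).const_mul 2)
    have hz : HasDerivWithinAt (fun _ : ℝ => (0:ℝ)) 0 (Icc 0 T) t := hasDerivWithinAt_const _ _ _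
    have hsum0 := hz.congr (f₁ := fun t => a t * l t ^ 2 + b t * l t + 2 * G t) hquad (hquad t ht)
    have hu := (uniqueDiffOn_Icc hT) t ht
    have heq := hu.eq_deriv _ hsum hsum0
    have : d = -(a' t * l t ^ 2 + b' t * l t + 2 * G' t) / (2 * a t * l t + b t) := by
      rw [eq_div_iff (hdne t ht)]
      simp only [Pi.pow_apply, Nat.cast_ofNat, Nat.add_one_sub_one, pow_one] at heq
      linear_combination heq
    exact hd.congr_deriv this
  · have caa : ContinuousOn a (Icc 0 T) := fun t ht => (da t ht).continuousWithinAt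
    have cbb : ContinuousOn b (Icc 0 T) := fun t ht => (db t ht).continuousWithinAt
    refine ContinuousOn.div ?_ ?_ hdne <;> fun_prop
  · intro t ht; linarith [hlb' t ht]
  · intro t ht
    rw [abs_div, abs_neg, div_lt_one (lt_of_lt_of_le (by positivity) (hden t ht))]
    refine lt_of_lt_of_le ?_ (hden t ht)
    have hl1 := hlb' t ht
    have h0 := abs_nonneg (l t)
    have t1 : |a' t * l t ^ 2| ≤ β / 16 := by
      rw [abs_mul, abs_pow]
      calc _ ≤ K * (β / (16 * K)) := mul_le_mul (ba' t ht) (by nlinarith) (by positivity) hK0.le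
        _ = β / 16 := by field_simp
    have t2 : |b' t * l t| ≤ β / 16 := by
      rw [abs_mul]
      calc _ ≤ K * (β / (16 * K)) := mul_le_mul (bb' t ht) hl1 (by positivity) hK0.le
        _ = β / 16 := by field_simp
    have t3 : |2 * G' t| ≤ β / 16 := by
      rw [abs_mul, abs_of_pos (show (0:ℝ) < 2 by norm_num)]
      have := bG' t ht
      have : η ≤ β / 64 := by nlinarith
      linarith
    have := abs_add_le (a' t * l t ^ 2 + b' t * l t) (2 * G' t)
    have := abs_add_le (a' t * l t ^ 2) (b' t * l t)
    linarith

noncomputable def gridExt (M N : ℤ)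
    (x : ↥(Finset.Icc 1 (M - 1) ×ˢ Finset.Icc 1 (N - 1)) → ℝ) (i j : ℤ) : ℝ :=
  if hp : (i, j) ∈ Finset.Icc 1 (M - 1) ×ˢ Finset.Icc 1 (N - 1) then x ⟨(i, j), hp⟩ else 0

lemma mem_grid (M N i j : ℤ) :
    (i, j) ∈ Finset.Icc 1 (M - 1) ×ˢ Finset.Icc 1 (N - 1) ↔ isInterior M N i j := by
  simp [isInterior, and_assoc]

lemma linear_flow {E : Type*} [NormedAddCommGroup E] [NormedSpace ℝ E] [CompleteSpace E]
    (B : E →L[ℝ] E) (T : ℝ) (x : E) :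
    ∃ γ : ℝ → E, γ T = x ∧ (∀ t, HasDerivAt γ (B (γ t)) t) ∧ ContDiff ℝ ∞ γ := by
  have hd : ∀ t, HasDerivAt (fun t => (NormedSpace.exp ((t - T) • B)) x)
      (B ((NormedSpace.exp ((t - T) • B)) x)) t := by
    intro t
    have h1 := hasDerivAt_exp_smul_const' (𝕂 := ℝ) B (t - T)
    have h2 := h1.scomp t ((hasDerivAt_id t).sub_const T)
    have h3 := h2.clm_apply (hasDerivAt_const t x)
    simpa using h3
  refine ⟨fun t => (NormedSpace.exp ((t - T) • B)) x, by simp, hd, ?_⟩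
  rw [contDiff_infty]
  intro n
  induction n with
  | zero => exact contDiff_zero.2 (continuous_iff_continuousAt.2 fun t => (hd t).continuousAt)
  | succ n ih =>
    push_cast
    refine contDiff_succ_iff_deriv.2 ⟨fun t => (hd t).differentiableAt, by simp, ?_⟩
    rw [funext fun t => (hd t).deriv]
    exact B.contDiff.comp ih

/-- free solution of the semi-discrete wave equation with prescribed data at time `T` -/
lemma free_solution (M N : ℤ) (h T : ℝ) (z w : ℤ → ℤ → ℝ) :
    ∃ V : ℤ → ℤ → ℝ → ℝ, (∀ i j, ContDiff ℝ ∞ (V i j)) ∧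
      (∀ i j, ¬ isInterior M N i j → V i j = 0) ∧
      (∀ i j, isInterior M N i j → ∀ t,
        deriv (deriv (V i j)) t = - discLap h (fun i j => V i j t) i j) ∧
      (∀ i j, isInterior M N i j → V i j T = z i j ∧ deriv (V i j) T = w i j) := by
  set S := Finset.Icc 1 (M - 1) ×ˢ Finset.Icc 1 (N - 1) with hS
  have gadd : ∀ x y : ↥S → ℝ, ∀ i j, gridExt M N (x + y) i j = gridExt M N x i j + gridExt M N y i j := by
    intro x y i j; unfold gridExt; split_ifs <;> simp
  have gsmul : ∀ (c : ℝ) (x : ↥S → ℝ), ∀ i j, gridExt M N (c • x) i j = c * gridExt M N x i j := by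
    intro c x i j; unfold gridExt; split_ifs <;> simp
  let B : ((↥S → ℝ) × (↥S → ℝ)) →ₗ[ℝ] ((↥S → ℝ) × (↥S → ℝ)) :=
    { toFun := fun x => (x.2, fun p => - discLap h (gridExt M N x.1) p.1.1 p.1.2)
      map_add' := by
        intro x y
        ext p
        · simp
        · simp [discLap, gadd]; ring
      map_smul' := by
        intro c x
        ext p
        · simp
        · simp [discLap, gsmul]; ring }
  obtain ⟨γ, hγT, hγd, hγs⟩ := linear_flow (LinearMap.toContinuousLinearMap B) T
    (fun p : ↥S => z p.1.1 p.1.2, fun p : ↥S => w p.1.1 p.1.2)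
  have hd1 : ∀ t, HasDerivAt (fun t => (γ t).1) (γ t).2 t := fun t => by
    have := (hasFDerivAt_fst (𝕜 := ℝ) (p := γ t)).comp_hasDerivAt t (hγd t)
    exact this
  have hd2 : ∀ t, HasDerivAt (fun t => (γ t).2)
      (fun p : ↥S => - discLap h (gridExt M N (γ t).1) p.1.1 p.1.2) t := fun t => by
    have := (hasFDerivAt_snd (𝕜 := ℝ) (p := γ t)).comp_hasDerivAt t (hγd t)
    exact this
  have key : ∀ i j (hp : (i, j) ∈ S), (fun t => gridExt M N (γ t).1 i j) = fun t => (γ t).1 ⟨(i, j), hp⟩ := by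
    intro i j hp; funext t; exact dif_pos hp
  have key1 : ∀ i j (hp : (i, j) ∈ S), deriv (fun t => gridExt M N (γ t).1 i j) = fun t => (γ t).2 ⟨(i, j), hp⟩ := by
    intro i j hp; rw [key i j hp]; funext t
    exact ((hasDerivAt_pi.1 (hd1 t)) ⟨(i, j), hp⟩).deriv
  refine ⟨fun i j t => gridExt M N (γ t).1 i j, ?_, ?_, ?_, ?_⟩
  · intro i j
    by_cases hp : (i, j) ∈ S
    · show ContDiff ℝ ∞ (fun t => gridExt M N (γ t).1 i j)
      rw [key i j hp]
      exact (contDiff_pi.1 (contDiff_fst.comp hγs)) ⟨(i, j), hp⟩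
    · have : (fun t => gridExt M N (γ t).1 i j) = fun _ => 0 := by
        funext t; exact dif_neg hp
      show ContDiff ℝ ∞ (fun t => gridExt M N (γ t).1 i j)
      rw [this]; exact contDiff_const
  · intro i j hij
    funext t
    exact dif_neg (fun hp => hij ((mem_grid M N i j).1 hp))
  · intro i j hij t
    have hp := (mem_grid M N i j).2 hij
    rw [key1 i j hp]
    exact ((hasDerivAt_pi.1 (hd2 t)) ⟨(i, j), hp⟩).deriv
  · intro i j hij
    have hp := (mem_grid M N i j).2 hij
    refine ⟨?_, ?_⟩
    · have := congrFun (key i j hp) T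
      exact this.trans (by rw [hγT])
    · rw [key1 i j hp]; simp [hγT]

/-- flat parametrization: rows counted from `i = M` -/
noncomputable def flatRow (N : ℤ) (h : ℝ) (p : ℤ → ℝ → ℝ) : ℕ → ℤ → ℝ → ℝ
  | 0, _ => 0
  | 1, j => p j
  | (k + 2), j => if 1 ≤ j ∧ j ≤ N - 1 then
      fun t => h ^ 2 * deriv (deriv (flatRow N h p (k + 1) j)) t + 4 * flatRow N h p (k + 1) j t
        - flatRow N h p k j t - flatRow N h p (k + 1) (j + 1) t - flatRow N h p (k + 1) (j - 1) t
      else 0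

lemma flatRow_smooth (N : ℤ) (h : ℝ) (p : ℤ → ℝ → ℝ) (hp : ∀ j, ContDiff ℝ ∞ (p j)) :
    ∀ k j, ContDiff ℝ ∞ (flatRow N h p k j) ∧ ContDiff ℝ ∞ (flatRow N h p (k + 1) j) := by
  intro k
  induction k with
  | zero => intro j; simp only [flatRow]; exact ⟨contDiff_const, hp j⟩
  | succ k ih =>
    intro j
    refine ⟨(ih j).2, ?_⟩
    rw [flatRow]
    split_ifs
    · have h1 := (contDiff_infty_iff_deriv.1 (contDiff_infty_iff_deriv.1 (ih j).2).2).2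
      exact ((((contDiff_const.mul h1).add (contDiff_const.mul (ih j).2)).sub (ih j).1).sub
        (ih (j + 1)).2).sub (ih (j - 1)).2
    · exact contDiff_const

lemma flatRow_out (N : ℤ) (h : ℝ) (p : ℤ → ℝ → ℝ)
    (hp : ∀ j, ¬ (1 ≤ j ∧ j ≤ N - 1) → p j = 0) (k : ℕ) (j : ℤ) (hj : ¬ (1 ≤ j ∧ j ≤ N - 1)) :
    flatRow N h p k j = 0 := by
  match k with
  | 0 => rfl
  | 1 => exact hp j hj
  | (k + 2) => rw [flatRow, if_neg hj]

/-- locality -/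
lemma flatRow_local (N : ℤ) (h : ℝ) (p q : ℤ → ℝ → ℝ) (s : ℝ)
    (hpq : ∀ j, p j =ᶠ[nhds s] q j) :
    ∀ k j, flatRow N h p k j =ᶠ[nhds s] flatRow N h q k j ∧
      flatRow N h p (k + 1) j =ᶠ[nhds s] flatRow N h q (k + 1) j := by
  intro k
  induction k with
  | zero => intro j; simp only [flatRow]; exact ⟨Filter.EventuallyEq.rfl, hpq j⟩
  | succ k ih =>
    intro j
    refine ⟨(ih j).2, ?_⟩
    rw [flatRow, flatRow]
    split_ifs
    · filter_upwards [(ih j).2.deriv.deriv, (ih j).2, (ih j).1, (ih (j + 1)).2, (ih (j - 1)).2]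
        with t h1 h2 h3 h4 h5
      rw [h1, h2, h3, h4, h5]
    · rfl

lemma flatRow_zero (N : ℤ) (h : ℝ) : ∀ k j, flatRow N h 0 k j = 0 ∧ flatRow N h 0 (k + 1) j = 0 := by
  intro k
  induction k with
  | zero => intro j; exact ⟨rfl, rfl⟩
  | succ k ih =>
    intro j
    refine ⟨(ih j).2, ?_⟩
    rw [flatRow]
    split_ifs
    · have hc : deriv (0 : ℝ → ℝ) = 0 := by funext t; exact deriv_const t 0
      funext t
      simp [(ih _).1, (ih _).2, hc]
    · rfl

lemma flatRow_free (M N : ℤ) (h : ℝ) (hh : 0 < h) (V : ℤ → ℤ → ℝ → ℝ)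
    (hout : ∀ i j, ¬ isInterior M N i j → V i j = 0)
    (heq : ∀ i j, isInterior M N i j → ∀ t,
        deriv (deriv (V i j)) t = - discLap h (fun i j => V i j t) i j) :
    ∀ k : ℕ, ∀ j, ((k : ℤ) < M → flatRow N h (V (M - 1)) k j = V (M - k) j) ∧
      ((k : ℤ) + 1 < M → flatRow N h (V (M - 1)) (k + 1) j = V (M - (k + 1)) j) := by
  intro k
  induction k with
  | zero =>
    intro j
    simp only [flatRow]
    refine ⟨fun _ => ?_, fun _ => by simp⟩
    rw [hout]
    rintro ⟨_, h2, _⟩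
    simp at h2
  | succ k ih =>
    intro j
    push_cast
    refine ⟨(ih j).2, fun hk => ?_⟩
    rw [flatRow]
    split_ifs with hj
    · funext t
      have e : M - ((k : ℤ) + 1 + 1) = M - (k + 1) - 1 := by ring
      have e2 : M - (k : ℤ) = M - (k + 1) + 1 := by ring
      rw [(ih j).2 (by omega), (ih j).1 (by omega), (ih (j + 1)).2 (by omega),
        (ih (j - 1)).2 (by omega), heq _ _ ⟨by omega, by omega, hj.1, hj.2⟩, e, e2]
      unfold discLap
      field_simp
      ring
    · rw [hout]
      rintro ⟨_, _, h3, h4⟩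
      exact hj ⟨h3, h4⟩

/-- steering trajectories -/
lemma steer (M N : ℤ) (h : ℝ) (hh : 0 < h) (T : ℝ) (hT : 0 < T) (z w : ℤ → ℤ → ℝ) :
    ∃ V : ℤ → ℤ → ℝ → ℝ, (∀ i j, ContDiff ℝ ∞ (V i j)) ∧
      (∀ i j, ¬ isInterior M N i j → V i j = 0) ∧
      (∀ i j, isInterior M N i j → 2 ≤ i → ∀ t,
        deriv (deriv (V i j)) t = - discLap h (fun i j => V i j t) i j) ∧
      (∀ i j, V i j 0 = 0 ∧ deriv (V i j) 0 = 0) ∧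
      (∀ i j, isInterior M N i j → V i j T = z i j ∧ deriv (V i j) T = w i j) := by
  obtain ⟨U, hUs, hUo, hUe, hUT⟩ := free_solution M N h T z w
  set χ : ℝ → ℝ := fun t => Real.smoothTransition (3 * t / T - 1) with hχ
  have hχs : ContDiff ℝ ∞ χ := by
    refine Real.smoothTransition.contDiff.comp ?_
    fun_prop
  set p : ℤ → ℝ → ℝ := fun j t => χ t * U (M - 1) j t with hp
  have hps : ∀ j, ContDiff ℝ ∞ (p j) := fun j => hχs.mul (hUs _ _)
  have hpo : ∀ j, ¬ (1 ≤ j ∧ j ≤ N - 1) → p j = 0 := by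
    intro j hj; funext t
    simp only [hp]
    rw [hUo _ _ (fun hI => hj ⟨hI.2.2.1, hI.2.2.2⟩)]; simp
  have hp0 : ∀ j, p j =ᶠ[nhds 0] (0 : ℤ → ℝ → ℝ) j := by
    intro j
    filter_upwards [Iio_mem_nhds (show (0:ℝ) < T / 3 by positivity)] with t ht
    have ht : t < T / 3 := ht
    have : χ t = 0 := Real.smoothTransition.zero_of_nonpos (by
      have : 3 * t / T ≤ 1 := by rw [div_le_one hT]; linarith
      linarith)
    simp [hp, this]
  have hpT : ∀ j, p j =ᶠ[nhds T] U (M - 1) j := by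
    intro j
    filter_upwards [Ioi_mem_nhds (show 2 * T / 3 < T by linarith)] with t ht
    have ht : 2 * T / 3 < t := ht
    have : χ t = 1 := Real.smoothTransition.one_of_one_le (by
      have : 2 ≤ 3 * t / T := by rw [le_div_iff₀ hT]; linarith
      linarith)
    simp [hp, this]
  classical
  set V : ℤ → ℤ → ℝ → ℝ := fun i j =>
    if isInterior M N i j then flatRow N h p (M - i).toNat j else 0 with hV
  have Vin : ∀ i j, isInterior M N i j → V i j = flatRow N h p (M - i).toNat j :=
    fun i j hI => if_pos hI
  have Vout : ∀ i j, ¬ isInterior M N i j → V i j = 0 := fun i j hI => if_neg hI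
  have Vrow : ∀ i j, 1 ≤ i → i ≤ M → V i j = flatRow N h p (M - i).toNat j := by
    intro i j h1 h2
    by_cases hI : isInterior M N i j
    · exact Vin i j hI
    · rw [Vout i j hI]
      by_cases hj : 1 ≤ j ∧ j ≤ N - 1
      · have : i = M := by
          by_contra hne
          exact hI ⟨h1, by omega, hj.1, hj.2⟩
        subst this
        simp [flatRow]
      · rw [flatRow_out N h p hpo _ _ hj]
  refine ⟨V, ?_, Vout, ?_, ?_, ?_⟩
  · intro i j
    by_cases hI : isInterior M N i j
    · rw [Vin i j hI]; exact (flatRow_smooth N h p hps _ _).1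
    · rw [Vout i j hI]; exact contDiff_const
  · intro i j hI hi t
    obtain ⟨_, hiM, hj1, hj2⟩ := hI
    obtain ⟨k, hk⟩ : ∃ k : ℕ, M - i = k + 1 := ⟨(M - i - 1).toNat, by omega⟩
    have e0 : (M - i).toNat = k + 1 := by omega
    have e1 : (M - (i + 1)).toNat = k := by omega
    have e2 : (M - (i - 1)).toNat = k + 2 := by omega
    unfold discLap
    simp only []
    rw [Vrow i j (by omega) (by omega), Vrow (i + 1) j (by omega) (by omega),
      Vrow (i - 1) j (by omega) (by omega), Vrow i (j + 1) (by omega) (by omega),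
      Vrow i (j - 1) (by omega) (by omega), e0, e1, e2]
    rw [flatRow, if_pos ⟨hj1, hj2⟩]
    field_simp
    ring
  · intro i j
    have : V i j =ᶠ[nhds 0] (fun _ => (0:ℝ)) := by
      by_cases hI : isInterior M N i j
      · rw [Vin i j hI]
        have := (flatRow_local N h p 0 0 hp0 (M - i).toNat j).1
        rwa [(flatRow_zero N h _ _).1] at this
      · rw [Vout i j hI]; rfl
    exact ⟨this.eq_of_nhds, by rw [this.deriv_eq]; simp⟩
  · intro i j hI
    have : V i j =ᶠ[nhds T] U i j := by
      rw [Vin i j hI]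
      have h1 := (flatRow_local N h p (U (M - 1)) T hpT (M - i).toNat j).1
      have h2 := (flatRow_free M N h hh U hUo hUe (M - i).toNat j).1
        (by have := hI.1; have := hI.2.1; omega)
      rw [h2] at h1
      have e : M - ((M - i).toNat : ℤ) = i := by have := hI.2.1; omega
      rwa [e] at h1
    exact ⟨by rw [this.eq_of_nhds]; exact (hUT i j hI).1,
      by rw [this.deriv_eq]; exact (hUT i j hI).2⟩

lemma steer_bound (M N : ℤ) (h : ℝ) (hh : 0 < h) (T : ℝ) (hT : 0 < T) :
    ∃ C : ℝ, 0 < C ∧ ∀ δ : ℝ, 0 < δ → ∀ z w : ℤ → ℤ → ℝ,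
      (∀ i j, isInterior M N i j → |z i j| ≤ δ ∧ |w i j| ≤ δ) →
      ∃ V : ℕ → ℤ → ℤ → ℝ → ℝ, (∀ k i j t, HasDerivAt (V k i j) (V (k + 1) i j t) t) ∧
      (∀ k i j, ¬ isInterior M N i j → ∀ t, V k i j t = 0) ∧
      (∀ i j, isInterior M N i j → 2 ≤ i → ∀ t,
        V 2 i j t = - discLap h (fun i j => V 0 i j t) i j) ∧
      (∀ i j, V 0 i j 0 = 0 ∧ V 1 i j 0 = 0) ∧
      (∀ i j, isInterior M N i j → V 0 i j T = z i j ∧ V 1 i j T = w i j) ∧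
      (∀ k < 4, ∀ i j, ∀ t ∈ Icc (0:ℝ) T, |V k i j t| ≤ C * δ) := by
  set S := Finset.Icc 1 (M - 1) ×ˢ Finset.Icc 1 (N - 1) with hS
  have memS : ∀ i j, (i, j) ∈ S ↔ isInterior M N i j := mem_grid M N
  choose P hPs hPo hPe hP0 hPT using fun b : ℤ × ℤ =>
    steer M N h hh T hT (fun i j => if (i, j) = b then 1 else 0) (fun _ _ => 0)
  choose Q hQs hQo hQe hQ0 hQT using fun b : ℤ × ℤ =>
    steer M N h hh T hT (fun _ _ => 0) (fun i j => if (i, j) = b then 1 else 0)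
  have hder : ∀ (f : ℝ → ℝ), ContDiff ℝ ∞ f → ∀ k t,
      HasDerivAt (iteratedDeriv k f) (iteratedDeriv (k + 1) f t) t := by
    intro f hf k t
    rw [iteratedDeriv_succ]
    have : Differentiable ℝ (iteratedDeriv k f) :=
      hf.differentiable_iteratedDeriv k (by exact_mod_cast WithTop.coe_lt_top _)
    exact (this t).hasDerivAt
  have hbd : ∀ (f : ℝ → ℝ), ContDiff ℝ ∞ f → ∀ k, ∃ c : ℝ, ∀ t ∈ Icc (0:ℝ) T,
      |iteratedDeriv k f t| ≤ c := by
    intro f hf k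
    have hc : Continuous (iteratedDeriv k f) :=
      continuous_iff_continuousAt.2 fun t => (hder f hf k t).continuousAt
    exact isCompact_Icc.exists_bound_of_continuousOn hc.continuousOn
  choose cP hcP using fun (b : ℤ × ℤ) (i j : ℤ) (k : ℕ) => hbd (P b i j) (hPs b i j) k
  choose cQ hcQ using fun (b : ℤ × ℤ) (i j : ℤ) (k : ℕ) => hbd (Q b i j) (hQs b i j) k
  have h0T : (0:ℝ) ∈ Icc (0:ℝ) T := ⟨le_rfl, hT.le⟩
  have nP : ∀ b i j k, 0 ≤ cP b i j k := fun b i j k => (abs_nonneg _).trans (hcP b i j k 0 h0T)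
  have nQ : ∀ b i j k, 0 ≤ cQ b i j k := fun b i j k => (abs_nonneg _).trans (hcQ b i j k 0 h0T)
  set R : ℕ → ℤ × ℤ → ℝ := fun k p => ∑ b ∈ S, (cP b p.1 p.2 k + cQ b p.1 p.2 k) with hR
  have nR : ∀ k p, 0 ≤ R k p := fun k p =>
    Finset.sum_nonneg fun b _ => add_nonneg (nP _ _ _ _) (nQ _ _ _ _)
  set C0 := ∑ k ∈ Finset.range 4, ∑ p ∈ S, R k p with hC0
  have nC0 : 0 ≤ C0 := Finset.sum_nonneg fun k _ => Finset.sum_nonneg fun p _ => nR k p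
  refine ⟨C0 + 1, by linarith, ?_⟩
  intro δ hδ z w hzw
  have itz : ∀ k t, iteratedDeriv k (0 : ℝ → ℝ) t = 0 := by
    intro k t
    induction k generalizing t with
    | zero => simp
    | succ k ih =>
      rw [iteratedDeriv_succ, show iteratedDeriv k (0 : ℝ → ℝ) = fun _ => 0 from funext ih]; simp
  set V : ℕ → ℤ → ℤ → ℝ → ℝ := fun k i j t => ∑ b ∈ S,
    (z b.1 b.2 * iteratedDeriv k (P b i j) t + w b.1 b.2 * iteratedDeriv k (Q b i j) t) with hV
  have Vout : ∀ k i j, ¬ isInterior M N i j → ∀ t, V k i j t = 0 := by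
    intro k i j hI t
    refine Finset.sum_eq_zero fun b _ => ?_
    rw [hPo b i j hI, hQo b i j hI, itz]; ring
  refine ⟨V, ?_, Vout, ?_, ?_, ?_, ?_⟩
  · intro k i j t
    exact HasDerivAt.fun_sum fun b _ => ((hder _ (hPs b i j) k t).const_mul _).add
      ((hder _ (hQs b i j) k t).const_mul _)
  · intro i j hI hi t
    have e : ∀ f : ℝ → ℝ, iteratedDeriv 2 f t = deriv (deriv f) t := by
      intro f; rw [iteratedDeriv_succ, iteratedDeriv_one]
    simp only [hV, e, hPe _ i j hI hi t, hQe _ i j hI hi t, iteratedDeriv_zero, discLap]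
    simp only [Finset.mul_sum, ← Finset.sum_sub_distrib, ← Finset.sum_neg_distrib]
    refine Finset.sum_congr rfl fun b _ => ?_
    ring
  · intro i j
    simp only [hV, iteratedDeriv_zero, iteratedDeriv_one, (hP0 _ i j).1, (hP0 _ i j).2,
      (hQ0 _ i j).1, (hQ0 _ i j).2]
    simp
  · intro i j hI
    have hm := (memS i j).2 hI
    simp only [hV, iteratedDeriv_zero, iteratedDeriv_one, (hPT _ i j hI).1, (hPT _ i j hI).2,
      (hQT _ i j hI).1, (hQT _ i j hI).2]
    simp [hm]
  · intro k hk i j t ht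
    by_cases hI : isInterior M N i j
    · have hm := (memS i j).2 hI
      calc |V k i j t| ≤ ∑ b ∈ S, |z b.1 b.2 * iteratedDeriv k (P b i j) t
              + w b.1 b.2 * iteratedDeriv k (Q b i j) t| := Finset.abs_sum_le_sum_abs _ _
        _ ≤ ∑ b ∈ S, (cP b i j k + cQ b i j k) * δ := by
            refine Finset.sum_le_sum fun b hb => ?_
            obtain ⟨hz, hw⟩ := hzw b.1 b.2 ((memS b.1 b.2).1 hb)
            refine (abs_add_le _ _).trans ?_
            rw [abs_mul, abs_mul, add_mul, mul_comm (cP b i j k), mul_comm (cQ b i j k)]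
            exact add_le_add (mul_le_mul hz (hcP b i j k t ht) (abs_nonneg _) hδ.le)
              (mul_le_mul hw (hcQ b i j k t ht) (abs_nonneg _) hδ.le)
        _ = R k (i, j) * δ := by rw [← Finset.sum_mul]
        _ ≤ (C0 + 1) * δ := by
            refine mul_le_mul_of_nonneg_right ?_ hδ.le
            have h1 : R k (i, j) ≤ ∑ p ∈ S, R k p :=
              Finset.single_le_sum (f := fun p => R k p) (fun p _ => nR k p) hm
            have h2 : ∑ p ∈ S, R k p ≤ C0 :=
              Finset.single_le_sum (f := fun k => ∑ p ∈ S, R k p)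
                (fun k _ => Finset.sum_nonneg fun p _ => nR k p) (Finset.mem_range.2 hk)
            linarith
    · rw [Vout k i j hI t, abs_zero]
      positivity

lemma unif_bound (N : ℤ) (T : ℝ) (hT : 0 < T) (f : ℤ → ℝ → ℝ)
    (hf : ∀ j, 1 ≤ j → j ≤ N - 1 → ContinuousOn (f j) (Icc 0 T)) :
    ∃ B : ℝ, 0 ≤ B ∧ ∀ j, 1 ≤ j → j ≤ N - 1 → ∀ t ∈ Icc (0:ℝ) T, |f j t| ≤ B := by
  have : ∀ j : ℤ, ∃ c : ℝ, 0 ≤ c ∧ (1 ≤ j → j ≤ N - 1 → ∀ t ∈ Icc (0:ℝ) T, |f j t| ≤ c) := by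
    intro j
    by_cases hj : 1 ≤ j ∧ j ≤ N - 1
    · obtain ⟨c, hc⟩ := isCompact_Icc.exists_bound_of_continuousOn (hf j hj.1 hj.2)
      exact ⟨c, (norm_nonneg _).trans (hc 0 ⟨le_rfl, hT.le⟩), fun _ _ t ht => hc t ht⟩
    · exact ⟨0, le_rfl, fun h1 h2 => absurd ⟨h1, h2⟩ hj⟩
  choose c hc0 hc using this
  refine ⟨∑ j ∈ Finset.Icc 1 (N - 1), c j, Finset.sum_nonneg fun j _ => hc0 j, ?_⟩
  intro j h1 h2 t ht
  exact (hc j h1 h2 t ht).trans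
    (Finset.single_le_sum (f := c) (fun j _ => hc0 j) (Finset.mem_Icc.2 ⟨h1, h2⟩))

lemma row_algebra (h l V2 y1 y2 ya yb v1 v2 va vb : ℝ) (hh : 0 < h) (hl : |l| ≤ 1 / 4)
    (hq : ((h ^ 2 * V2 + 4 * v1 - v2 - va - vb) - 2 * (y1 + v1) + (y2 + v2)) * l ^ 2
      + (3 * (h ^ 2 * V2 + 4 * v1 - v2 - va - vb) + (y2 + v2) - 4 * (y1 + v1)) * l
      + 2 * (h ^ 2 * V2 + 4 * v1 - v2 - va - vb) = 0) :
    V2 - (1 / h ^ 2) * (4 * y1 - y2 - 0 - ya - yb) =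
      - ((1 / h ^ 2) * (2 * (1 + 1 / (1 + l)) * (y1 + v1) - (2 / (2 + l)) * (y2 + v2)
        - (ya + va) - (yb + vb))) := by
  have := abs_le.1 hl
  have h1 : 1 + l ≠ 0 := by linarith
  have h2 : 2 + l ≠ 0 := by linarith
  rw [← sub_eq_zero]
  have e : V2 - (1 / h ^ 2) * (4 * y1 - y2 - 0 - ya - yb) -
      - ((1 / h ^ 2) * (2 * (1 + 1 / (1 + l)) * (y1 + v1) - (2 / (2 + l)) * (y2 + v2)
        - (ya + va) - (yb + vb))) =
      (((h ^ 2 * V2 + 4 * v1 - v2 - va - vb) - 2 * (y1 + v1) + (y2 + v2)) * l ^ 2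
      + (3 * (h ^ 2 * V2 + 4 * v1 - v2 - va - vb) + (y2 + v2) - 4 * (y1 + v1)) * l
      + 2 * (h ^ 2 * V2 + 4 * v1 - v2 - va - vb)) / (h ^ 2 * (1 + l) * (2 + l)) := by
    field_simp
    ring
  rw [e, hq, zero_div]

/-- local exact controllability of the semi-discrete wave equation by the
shape of the domain. If the reference solution `y₀` (with time derivative `y₀'`) of
`∂_t² y₀ + A y₀ = F`, `y₀(0) = u₀`, `∂_t y₀(0) = u₁` satisfies the discrete
non-degeneracy condition, then every pair of interior values `(Z, W)` sufficiently close
to `(y₀(T), ∂_t y₀(T))` is reached at time `T` (state and velocity) by the solution of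
the perturbed equation `∂_t² u + A(λ(t)) u = F` for some small `C¹` deformation `λ` with
`|λ_j| ≤ ε` and `|λ_j'| < 1`. -/
theorem stmt14 (M N : ℤ) (hM : 3 ≤ M) (hN : 3 ≤ N) (h : ℝ) (hh : 0 < h)
    (T : ℝ) (hT : 0 < T)
    (F : ℝ → ℤ → ℤ → ℝ)
    (hF : ∀ i j, isInterior M N i j → ContinuousOn (fun t => F t i j) (Icc (0 : ℝ) T))
    (u₀ u₁ : ℤ → ℤ → ℝ)
    (hu₀ : ∀ i j, onBoundary M N i j → u₀ i j = 0)
    (hu₁ : ∀ i j, onBoundary M N i j → u₁ i j = 0)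
    (y₀ y₀' : ℝ → ℤ → ℤ → ℝ)
    (hy₀bd : ∀ t ∈ Icc (0 : ℝ) T, ∀ i j, onBoundary M N i j → y₀ t i j = 0)
    (hy₀der : ∀ t ∈ Icc (0 : ℝ) T, ∀ i j,
      HasDerivWithinAt (fun s => y₀ s i j) (y₀' t i j) (Icc (0 : ℝ) T) t)
    (hy₀ode : ∀ t ∈ Icc (0 : ℝ) T, ∀ i j, isInterior M N i j →
      HasDerivWithinAt (fun s => y₀' s i j) (F t i j - discLap h (y₀ t) i j)
        (Icc (0 : ℝ) T) t)
    (hy₀init : y₀ 0 = u₀) (hy₀init' : y₀' 0 = u₁)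
    (hnd : ∀ t ∈ Icc (0 : ℝ) T, ∀ j : ℤ, 1 ≤ j → j ≤ N - 1 →
      (1 / 2) * y₀ t 2 j - 2 * y₀ t 1 j ≠ 0) :
    ∃ ε ∈ Ioo (0 : ℝ) (1 / 2), ∃ δ > (0 : ℝ),
      ∀ Z W : ℤ → ℤ → ℝ,
        (∀ i j, isInterior M N i j → |Z i j - y₀ T i j| + |W i j - y₀' T i j| < δ) →
        ∃ lam lam' : ℝ → ℤ → ℝ,
          (∀ t ∈ Icc (0 : ℝ) T, ∀ j,
            HasDerivWithinAt (fun s => lam s j) (lam' t j) (Icc (0 : ℝ) T) t) ∧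
          (∀ j, ContinuousOn (fun t => lam' t j) (Icc (0 : ℝ) T)) ∧
          (∀ t ∈ Icc (0 : ℝ) T, ∀ j, |lam t j| ≤ ε) ∧
          (∀ t ∈ Icc (0 : ℝ) T, ∀ j, |lam' t j| < 1) ∧
          ∃ u u' : ℝ → ℤ → ℤ → ℝ,
            (∀ t ∈ Icc (0 : ℝ) T, ∀ i j, onBoundary M N i j → u t i j = 0) ∧
            (∀ t ∈ Icc (0 : ℝ) T, ∀ i j,
              HasDerivWithinAt (fun s => u s i j) (u' t i j) (Icc (0 : ℝ) T) t) ∧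
            (∀ t ∈ Icc (0 : ℝ) T, ∀ i j, isInterior M N i j →
              HasDerivWithinAt (fun s => u' s i j)
                (F t i j - pertOp h (lam t) (u t) i j) (Icc (0 : ℝ) T) t) ∧
            u 0 = u₀ ∧ u' 0 = u₁ ∧
            (∀ i j, isInterior M N i j → u T i j = Z i j ∧ u' T i j = W i j) := by
  have int1 : ∀ j, 1 ≤ j → j ≤ N - 1 → isInterior M N 1 j := fun j a b => ⟨by omega, by omega, a, b⟩
  have int2 : ∀ j, 1 ≤ j → j ≤ N - 1 → isInterior M N 2 j := fun j a b => ⟨by omega, by omega, a, b⟩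
  have cy : ∀ i j, ContinuousOn (fun t => y₀ t i j) (Icc 0 T) :=
    fun i j t ht => (hy₀der t ht i j).continuousWithinAt
  have cy' : ∀ i j, isInterior M N i j → ContinuousOn (fun t => y₀' t i j) (Icc 0 T) :=
    fun i j hI t ht => (hy₀ode t ht i j hI).continuousWithinAt
  obtain ⟨B1, nB1, hB1⟩ := unif_bound N T hT (fun j t => y₀ t 1 j) (fun j _ _ => cy 1 j)
  obtain ⟨B2, nB2, hB2⟩ := unif_bound N T hT (fun j t => y₀ t 2 j) (fun j _ _ => cy 2 j)
  obtain ⟨B3, nB3, hB3⟩ := unif_bound N T hT (fun j t => y₀' t 1 j)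
    (fun j h1 h2 => cy' 1 j (int1 j h1 h2))
  obtain ⟨B4, nB4, hB4⟩ := unif_bound N T hT (fun j t => y₀' t 2 j)
    (fun j h1 h2 => cy' 2 j (int2 j h1 h2))
  obtain ⟨B5, nB5, hB5⟩ := unif_bound N T hT (fun j t => ((1 / 2) * y₀ t 2 j - 2 * y₀ t 1 j)⁻¹)
    (fun j h1 h2 => ContinuousOn.inv₀ (((cy 2 j).const_smul (1 / 2 : ℝ)).sub
      ((cy 1 j).const_smul (2 : ℝ))) (fun t ht => hnd t ht j h1 h2))
  obtain ⟨C, hC, hsteer⟩ := steer_bound M N h hh T hT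
  set Y := B1 + B2 + B3 + B4 with hY
  set K := 5 * Y + 8 with hK
  have hK1 : 1 ≤ K := by linarith
  set β := 1 / (B5 + 1) with hβ
  have hβ0 : 0 < β := by positivity
  have hβ1 : β ≤ 1 := by rw [hβ, div_le_one (by linarith)]; linarith
  have hcl : ∀ j, 1 ≤ j → j ≤ N - 1 → ∀ t ∈ Icc (0:ℝ) T, 2 * β ≤ |y₀ t 2 j - 4 * y₀ t 1 j| := by
    intro j h1 h2 t ht
    have hn := hnd t ht j h1 h2
    have hb := hB5 j h1 h2 t ht
    rw [abs_inv] at hb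
    have hp : 0 < |(1 / 2) * y₀ t 2 j - 2 * y₀ t 1 j| := abs_pos.2 hn
    have h3 : β ≤ |(1 / 2) * y₀ t 2 j - 2 * y₀ t 1 j| := by
      rw [hβ, div_le_iff₀ (by linarith)]
      rw [inv_le_iff_one_le_mul₀ hp] at hb
      nlinarith
    have e : y₀ t 2 j - 4 * y₀ t 1 j = 2 * ((1 / 2) * y₀ t 2 j - 2 * y₀ t 1 j) := by ring
    rw [e, abs_mul, abs_of_pos (show (0:ℝ) < 2 by norm_num)]
    linarith
  set η := β ^ 2 / (64 * K) with hη
  have hK0 : 0 < K := by linarith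
  have hη0 : 0 < η := by positivity
  have hη1 : η ≤ β / 64 := by
    rw [hη, div_le_div_iff₀ (by positivity) (by norm_num)]
    nlinarith
  set δ := η / ((h ^ 2 + 7) * C) with hδ
  have hδ0 : 0 < δ := by positivity
  set σ := C * δ with hσ
  have hσ0 : 0 < σ := by positivity
  have hση : (h ^ 2 + 7) * σ = η := by rw [hσ, hδ]; field_simp
  have hσle : 7 * σ ≤ η := by rw [← hση]; nlinarith [sq_nonneg h]
  refine ⟨1 / 4, ⟨by norm_num, by norm_num⟩, δ, hδ0, ?_⟩
  intro Z W hZW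
  obtain ⟨V, hVd, hVo, hVe, hV0, hVT, hVb⟩ := hsteer δ hδ0
    (fun i j => Z i j - y₀ T i j) (fun i j => W i j - y₀' T i j) (by
      intro i j hI
      have := hZW i j hI
      have := abs_nonneg (Z i j - y₀ T i j)
      have := abs_nonneg (W i j - y₀' T i j)
      exact ⟨by linarith, by linarith⟩)
  have hVw : ∀ k i j t, HasDerivWithinAt (V k i j) (V (k + 1) i j t) (Icc 0 T) t :=
    fun k i j t => (hVd k i j t).hasDerivWithinAt
  have hVc : ∀ k i j, Continuous (V k i j) :=
    fun k i j => continuous_iff_continuousAt.2 fun t => (hVd k i j t).continuousAt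
  set G : ℕ → ℤ → ℝ → ℝ := fun k j t => h ^ 2 * V (k + 2) 1 j t + 4 * V k 1 j t - V k 2 j t
    - V k 1 (j + 1) t - V k 1 (j - 1) t with hG
  have hGd : ∀ k j t, HasDerivWithinAt (G k j) (G (k + 1) j t) (Icc 0 T) t := by
    intro k j t
    exact (((((hVw (k + 2) 1 j t).const_mul (h ^ 2)).add ((hVw k 1 j t).const_mul 4)).sub
      (hVw k 2 j t)).sub (hVw k 1 (j + 1) t)).sub (hVw k 1 (j - 1) t)
  have hGc : ∀ k j, Continuous (G k j) := by
    intro k j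
    have := hVc
    simp only [hG]
    fun_prop
  have hGb : ∀ k < 2, ∀ j, ∀ t ∈ Icc (0:ℝ) T, |G k j t| ≤ η := by
    intro k hk j t ht
    have b1 := abs_le.1 (hVb (k + 2) (by omega) 1 j t ht)
    have b2 := abs_le.1 (hVb k (by omega) 1 j t ht)
    have b3 := abs_le.1 (hVb k (by omega) 2 j t ht)
    have b4 := abs_le.1 (hVb k (by omega) 1 (j + 1) t ht)
    have b5 := abs_le.1 (hVb k (by omega) 1 (j - 1) t ht)
    have b6 : h ^ 2 * V (k + 2) 1 j t ≤ h ^ 2 * σ := mul_le_mul_of_nonneg_left b1.2 (sq_nonneg h)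
    have b7 : h ^ 2 * (-σ) ≤ h ^ 2 * V (k + 2) 1 j t := mul_le_mul_of_nonneg_left b1.1 (sq_nonneg h)
    rw [abs_le, ← hση]
    simp only [hG]
    constructor <;> nlinarith
  have hex : ∀ j : ℤ, ∃ l l' : ℝ → ℝ,
      (∀ t ∈ Icc (0:ℝ) T, HasDerivWithinAt l (l' t) (Icc 0 T) t) ∧
      ContinuousOn l' (Icc 0 T) ∧ (∀ t ∈ Icc (0:ℝ) T, |l t| ≤ 1 / 4) ∧
      (∀ t ∈ Icc (0:ℝ) T, |l' t| < 1) ∧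
      (1 ≤ j → j ≤ N - 1 → ∀ t ∈ Icc (0:ℝ) T,
        (G 0 j t - 2 * (y₀ t 1 j + V 0 1 j t) + (y₀ t 2 j + V 0 2 j t)) * l t ^ 2
        + (3 * G 0 j t + (y₀ t 2 j + V 0 2 j t) - 4 * (y₀ t 1 j + V 0 1 j t)) * l t
        + 2 * G 0 j t = 0) := by
    intro j
    by_cases hj : 1 ≤ j ∧ j ≤ N - 1
    · obtain ⟨h1, h2⟩ := hj
      have d1 : ∀ t ∈ Icc (0:ℝ) T, HasDerivWithinAt (fun t => y₀ t 1 j + V 0 1 j t)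
        (y₀' t 1 j + V 1 1 j t) (Icc 0 T) t := fun t ht => (hy₀der t ht 1 j).add (hVw 0 1 j t)
      have d2 : ∀ t ∈ Icc (0:ℝ) T, HasDerivWithinAt (fun t => y₀ t 2 j + V 0 2 j t)
        (y₀' t 2 j + V 1 2 j t) (Icc 0 T) t := fun t ht => (hy₀der t ht 2 j).add (hVw 0 2 j t)
      have c1 := cy' 1 j (int1 j h1 h2)
      have c2 := cy' 2 j (int2 j h1 h2)
      have c3 := (hVc 1 1 j).continuousOn (s := Icc 0 T)
      have c4 := (hVc 1 2 j).continuousOn (s := Icc 0 T)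
      have c5 := (hGc 1 j).continuousOn (s := Icc 0 T)
      obtain ⟨l, l', r1, r2, r3, r4, r5⟩ := quad_control T K β hT hK1 hβ0 hβ1 (G 0 j) (G 1 j)
        (fun t => G 0 j t - 2 * (y₀ t 1 j + V 0 1 j t) + (y₀ t 2 j + V 0 2 j t))
        (fun t => G 1 j t - 2 * (y₀' t 1 j + V 1 1 j t) + (y₀' t 2 j + V 1 2 j t))
        (fun t => 3 * G 0 j t + (y₀ t 2 j + V 0 2 j t) - 4 * (y₀ t 1 j + V 0 1 j t))
        (fun t => 3 * G 1 j t + (y₀' t 2 j + V 1 2 j t) - 4 * (y₀' t 1 j + V 1 1 j t))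
        (fun t ht => hGd 0 j t)
        (fun t ht => ((hGd 0 j t).sub ((d1 t ht).const_mul 2)).add (d2 t ht))
        (fun t ht => (((hGd 0 j t).const_mul 3).add (d2 t ht)).sub ((d1 t ht).const_mul 4))
        c5 (by fun_prop) (by fun_prop)
        (fun t ht => by
          have := abs_le.1 (hGb 0 (by omega) j t ht)
          have := abs_le.1 (hB1 j h1 h2 t ht)
          have := abs_le.1 (hB2 j h1 h2 t ht)
          have := abs_le.1 (hVb 0 (by omega) 1 j t ht)
          have := abs_le.1 (hVb 0 (by omega) 2 j t ht)
          rw [abs_le]; constructor <;> linarith)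
        (fun t ht => by
          have := abs_le.1 (hGb 1 (by omega) j t ht)
          have := abs_le.1 (hB3 j h1 h2 t ht)
          have := abs_le.1 (hB4 j h1 h2 t ht)
          have := abs_le.1 (hVb 1 (by omega) 1 j t ht)
          have := abs_le.1 (hVb 1 (by omega) 2 j t ht)
          rw [abs_le]; constructor <;> linarith)
        (fun t ht => by
          have := abs_le.1 (hGb 1 (by omega) j t ht)
          have := abs_le.1 (hB3 j h1 h2 t ht)
          have := abs_le.1 (hB4 j h1 h2 t ht)
          have := abs_le.1 (hVb 1 (by omega) 1 j t ht)
          have := abs_le.1 (hVb 1 (by omega) 2 j t ht)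
          rw [abs_le]; constructor <;> linarith)
        (fun t ht => by
          have := abs_le.1 (hGb 0 (by omega) j t ht)
          have := abs_le.1 (hVb 0 (by omega) 1 j t ht)
          have := abs_le.1 (hVb 0 (by omega) 2 j t ht)
          rcases le_abs.1 (hcl j h1 h2 t ht) with hc | hc
          · exact le_abs.2 (Or.inl (by linarith))
          · exact le_abs.2 (Or.inr (by linarith)))
        (fun t ht => hGb 0 (by omega) j t ht) (fun t ht => hGb 1 (by omega) j t ht)
      exact ⟨l, l', r1, r2, r3, r4, fun _ _ => r5⟩
    · refine ⟨fun _ => 0, fun _ => 0, fun t _ => hasDerivWithinAt_const _ _ _,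
        continuousOn_const, ?_, ?_, fun h1 h2 => absurd ⟨h1, h2⟩ hj⟩
      · intro t _; norm_num
      · intro t _; norm_num
  choose l l' r1 r2 r3 r4 r5 using hex
  refine ⟨fun t j => l j t, fun t j => l' j t, fun t ht j => r1 j t ht, r2,
    fun t ht j => r3 j t ht, fun t ht j => r4 j t ht,
    fun t i j => y₀ t i j + V 0 i j t, fun t i j => y₀' t i j + V 1 i j t, ?_, ?_, ?_, ?_, ?_, ?_⟩
  · intro t ht i j hb
    simp only []
    rw [hy₀bd t ht i j hb, hVo 0 i j hb.2, add_zero]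
  · intro t ht i j
    exact (hy₀der t ht i j).add (hVw 0 i j t)
  · intro t ht i j hI
    refine ((hy₀ode t ht i j hI).add (hVw 1 i j t)).congr_deriv ?_
    by_cases hi : i = 1
    · subst hi
      have hI' := hI
      obtain ⟨_, _, h1, h2⟩ := hI'
      have hq := row_algebra h (l j t) (V 2 1 j t) (y₀ t 1 j) (y₀ t 2 j) (y₀ t 1 (j + 1))
        (y₀ t 1 (j - 1)) (V 0 1 j t) (V 0 2 j t) (V 0 1 (j + 1) t) (V 0 1 (j - 1) t) hh
        (r3 j t ht) (r5 j h1 h2 t ht)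
      have hz : y₀ t 0 j = 0 := hy₀bd t ht 0 j
        ⟨⟨le_rfl, by omega, by omega, by omega⟩, fun hI0 => by have := hI0.1; omega⟩
      simp only [pertOp, discLap, if_true]
      norm_num only at hq ⊢
      rw [hz]
      linear_combination hq
    · have hi2 : 2 ≤ i := by have := hI.1; omega
      have e := hVe i j hI hi2 t
      simp only [pertOp, if_neg hi]
      norm_num only
      rw [e]
      simp only [discLap]
      ring
  · funext i j
    simp [(hV0 i j).1, hy₀init]
  · funext i j
    simp [(hV0 i j).2, hy₀init']
  · intro i j hI
    have := hVT i j hI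
    simp only [this.1, this.2]
    constructor <;> ring
end
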